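/- Let G=(V,E,I,{s,t}) be an inner Eulerian grapht with |E|≤ℵ₀ in which δ_G(s) is the unique Erdős-Menger st-cut. Then after the deletion of at most two edges, s remains linked. -/

import Mathlib

/-! Common definitions: graphts (multigraphs with terminals), walks, paths, cycles,
edge cuts, inner Eulerian graphts, path systems, linkages, Erdős–Menger cuts,
restriction (edge deletion) and contraction. -/

universe u v

/-- A *grapht*: a multigraph (no loops, parallel edges allowed) given by an incidence
function `I : E → Sym2 V`, together with a set `T` of at least two terminal vertices. -/
structure Grapht (V : Type u) (E : Type v) where
  I : E → Sym2 V
  loopless : ∀ e : E, ¬ (I e).IsDiag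
  T : Set V
  T_nontrivial : T.Nontrivial

namespace Grapht

variable {V : Type u} {E : Type v}

/-- `G.IsWalk vs es` holds when `vs` is the vertex sequence and `es` the edge sequence
of a walk in `G`. -/
inductive IsWalk (G : Grapht V E) : List V → List E → Prop
  | nil (v : V) : IsWalk G [v] []
  | cons {u w : V} {vs : List V} {e : E} {es : List E} :
      G.I e = s(u, w) → IsWalk G (w :: vs) es → IsWalk G (u :: w :: vs) (e :: es)

/-- A finite path in the grapht `G` (no repeated vertices), with endpoints `first`, `last`. -/
structure Path (G : Grapht V E) where
  first : V
  last : V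
  verts : List V
  edges : List E
  isWalk : G.IsWalk verts edges
  nodup : verts.Nodup
  head_eq : verts.head? = some first
  getLast_eq : verts.getLast? = some last

/-- A finite cycle in the grapht `G`. -/
structure Cycle (G : Grapht V E) where
  verts : List V
  edges : List E
  isWalk : G.IsWalk verts edges
  closed : verts.head? = verts.getLast?
  nontrivial : edges ≠ []
  edges_nodup : edges.Nodup
  tail_nodup : verts.tail.Nodup

variable {G : Grapht V E}

/-- The internal (inner) vertices of a path. -/
def Path.inner (P : G.Path) : List V := (P.verts.drop 1).dropLast

/-- The edge set of a path. -/
def Path.edgeSet (P : G.Path) : Set E := {e | e ∈ P.edges}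

/-- The edge set of a cycle. -/
def Cycle.edgeSet (C : G.Cycle) : Set E := {e | e ∈ C.edges}

variable (G)

/-- `δ_G(X)`: the set of edges with exactly one endpoint in `X`. -/
def edgeCut (X : Set V) : Set E :=
  {e | ∃ u w, G.I e = s(u, w) ∧ u ∈ X ∧ w ∉ X}

/-- A grapht is *inner Eulerian* if there is no `X ⊆ V ∖ T` whose cut `δ(X)` is a
finite set of odd size. -/
def InnerEulerian : Prop :=
  ∀ X : Set V, Disjoint X G.T → ¬ ((G.edgeCut X).Finite ∧ Odd (G.edgeCut X).ncard)

/-- An `AB`-path: a path with first vertex in `A`, last vertex in `B` and no internal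
vertex in `A ∪ B`. -/
def IsABPath (A B : Set V) (P : G.Path) : Prop :=
  P.first ∈ A ∧ P.last ∈ B ∧ ∀ v ∈ P.inner, v ∉ A ∪ B

/-- A `T`-path: a path between two distinct terminal vertices without internal
terminal vertices. -/
def IsTPath (P : G.Path) : Prop :=
  P.first ∈ G.T ∧ P.last ∈ G.T ∧ P.first ≠ P.last ∧ ∀ v ∈ P.inner, v ∉ G.T

/-- A system of pairwise edge-disjoint paths. -/
def EdgeDisjoint (Ps : Set G.Path) : Prop :=
  Ps.Pairwise fun P Q => ∀ e, e ∈ P.edges → e ∉ Q.edges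

/-- A system of pairwise edge-disjoint `T`-paths. -/
def IsTPathSystem (Ps : Set G.Path) : Prop :=
  G.EdgeDisjoint Ps ∧ ∀ P ∈ Ps, G.IsTPath P

/-- The set of edges used by a path system. -/
def sysEdges (Ps : Set G.Path) : Set E := ⋃ P ∈ Ps, P.edgeSet

/-- `C` is *orthogonal* to the path system `Ps`: `C` consists of exactly one edge from
each path of `Ps`. -/
def Orthogonal (C : Set E) (Ps : Set G.Path) : Prop :=
  (∀ P ∈ Ps, ∃! e, e ∈ C ∧ e ∈ P.edges) ∧ ∀ e ∈ C, ∃ P ∈ Ps, e ∈ P.edges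

/-- `C` separates `A` and `B`: every `AB`-path meets `C` (i.e. `G − C` has no `AB`-path). -/
def Separates (C : Set E) (A B : Set V) : Prop :=
  ∀ P : G.Path, G.IsABPath A B P → ∃ e ∈ C, e ∈ P.edges

/-- An `AB`-cut. -/
def IsABCut (A B : Set V) (C : Set E) : Prop :=
  ∀ P : G.Path, G.IsABPath A B P → ∃ e ∈ C, e ∈ P.edges

/-- An Erdős–Menger `AB`-cut: an `AB`-cut orthogonal to some system of pairwise
edge-disjoint `AB`-paths. -/
def IsEMABCut (A B : Set V) (C : Set E) : Prop :=
  G.IsABCut A B C ∧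
    ∃ Ps : Set G.Path, G.EdgeDisjoint Ps ∧ (∀ P ∈ Ps, G.IsABPath A B P) ∧ G.Orthogonal C Ps

/-- The order `⊴` on (Erdős–Menger) `AB`-cuts: on every `AB`-path the first edge of `C`
comes no later than the first edge of `C'`. -/
def ABCutLE (A B : Set V) (C C' : Set E) : Prop :=
  ∀ P : G.Path, G.IsABPath A B P →
    ∀ i : Fin P.edges.length, P.edges.get i ∈ C' →
      ∃ j : Fin P.edges.length, (j : ℕ) ≤ (i : ℕ) ∧ P.edges.get j ∈ C

/-- `C` is the `⊴`-largest Erdős–Menger `AB`-cut. -/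
def IsLargestEMABCut (A B : Set V) (C : Set E) : Prop :=
  G.IsEMABCut A B C ∧ ∀ C', G.IsEMABCut A B C' → G.ABCutLE A B C' C

/-- A system `Ps` of pairwise edge-disjoint `T`-paths *links* the terminal `t`:
it covers `δ(t)`. -/
def Links (Ps : Set G.Path) (t : V) : Prop :=
  G.IsTPathSystem Ps ∧ ∀ e ∈ G.edgeCut {t}, ∃ P ∈ Ps, e ∈ P.edges

/-- The terminal `t` is linked. -/
def Linked (t : V) : Prop := ∃ Ps : Set G.Path, G.Links Ps t

/-- The linkability condition: every terminal is linked. -/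
def LinkabilityCondition : Prop := ∀ t ∈ G.T, G.Linked t

/-- A perfect linkage: a system of pairwise edge-disjoint `T`-paths linking every
terminal. -/
def IsPerfectLinkage (Ps : Set G.Path) : Prop :=
  G.IsTPathSystem Ps ∧ ∀ t ∈ G.T, ∀ e ∈ G.edgeCut {t}, ∃ P ∈ Ps, e ∈ P.edges

/-- In the two-terminal setting: a system of pairwise edge-disjoint `st`-paths
covering `δ(s)` (a linkage of `s`). -/
def IsStLinkage (s t : V) (Ps : Set G.Path) : Prop :=
  G.EdgeDisjoint Ps ∧ (∀ P ∈ Ps, G.IsABPath {s} {t} P) ∧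
    ∀ e ∈ G.edgeCut {s}, ∃ P ∈ Ps, e ∈ P.edges

/-- `s` is linked (two-terminal setting). -/
def StLinked (s t : V) : Prop := ∃ Ps : Set G.Path, G.IsStLinkage s t Ps

/-- `λ_G(A,B)`: the maximal number of pairwise edge-disjoint `AB`-paths. -/
noncomputable def lambda (A B : Set V) : ℕ :=
  sSup {n : ℕ | ∃ Ps : Set G.Path, G.EdgeDisjoint Ps ∧ (∀ P ∈ Ps, G.IsABPath A B P) ∧
    Ps.Finite ∧ Ps.ncard = n}

/-- The grapht obtained by deleting all edges outside `F`. -/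
def restrict (F : Set E) : Grapht V F where
  I e := G.I e.1
  loopless e := G.loopless e.1
  T := G.T
  T_nontrivial := G.T_nontrivial

/-- The map sending every vertex of a contracted set `X t` (`t ∈ T`) to `t`. -/
noncomputable def contractMap (X : V → Set V) : V → V := fun v =>
  letI := Classical.dec (∃ u ∈ G.T, v ∈ X u)
  if h : ∃ u ∈ G.T, v ∈ X u then h.choose else v

/-- The contraction `G/ℱ` of the family `ℱ = {X t : t ∈ T}`: each `X t` is contracted
to `t` and the arising loops are deleted. -/
noncomputable def contract (X : V → Set V) :
    Grapht V {e : E // ¬ ((G.I e).map (G.contractMap X)).IsDiag} where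
  I e := (G.I e.1).map (G.contractMap X)
  loopless e := e.2
  T := G.T
  T_nontrivial := G.T_nontrivial

end Grapht

namespace Grapht
variable {V : Type u} {E : Type v}

/-- Edges of a list of arcs. -/
def eds (l : List (V × E × V)) : List E := l.map (fun a => a.2.1)

/-- Walks recorded as lists of arcs. -/
inductive Wk (G : Grapht V E) : V → V → List (V × E × V) → Prop
  | nil (x : V) : Wk G x x []
  | cons {x y z : V} {e : E} {l : List (V × E × V)} :
      G.I e = s(x, y) → Wk G y z l → Wk G x z ((x, e, y) :: l)

variable {G : Grapht V E}

theorem mem_eds {l : List (V × E × V)} {e : E} : e ∈ eds l ↔ ∃ a ∈ l, a.2.1 = e := by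
  simp [eds]

theorem eds_append (l l' : List (V × E × V)) : eds (l ++ l') = eds l ++ eds l' := by
  simp [eds]

theorem eds_cons (a : V × E × V) (l : List (V × E × V)) : eds (a :: l) = a.2.1 :: eds l := by
  simp [eds]

theorem Wk.append {x y z : V} {l l' : List (V × E × V)} (h : G.Wk x y l) (h' : G.Wk y z l') :
    G.Wk x z (l ++ l') := by
  induction h with
  | nil => simpa using h'
  | cons he _ ih => exact Wk.cons he (ih h')

theorem Wk.split {l1 l2 : List (V × E × V)} {a : V × E × V} {x z : V}
    (h : G.Wk x z (l1 ++ a :: l2)) :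
    G.Wk x a.1 l1 ∧ G.I a.2.1 = s(a.1, a.2.2) ∧ G.Wk a.2.2 z l2 := by
  induction l1 generalizing x with
  | nil =>
    cases h with
    | cons he h => exact ⟨Wk.nil _, he, h⟩
  | cons b l1 ih =>
    cases h with
    | cons he h =>
      obtain ⟨h1, h2, h3⟩ := ih h
      exact ⟨Wk.cons he h1, h2, h3⟩

theorem Wk.arc {l : List (V × E × V)} {x z : V} (h : G.Wk x z l) {a : V × E × V} (ha : a ∈ l) :
    G.I a.2.1 = s(a.1, a.2.2) := by
  obtain ⟨l1, l2, rfl⟩ := List.append_of_mem ha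
  exact h.split.2.1

/-- Reversal of an arc list. -/
def rev (l : List (V × E × V)) : List (V × E × V) := (l.map (fun a => (a.2.2, a.2.1, a.1))).reverse

theorem mem_rev {l : List (V × E × V)} {a : V × E × V} :
    a ∈ rev l ↔ (a.2.2, a.2.1, a.1) ∈ l := by
  simp only [rev, List.mem_reverse, List.mem_map]
  constructor
  · rintro ⟨b, hb, rfl⟩; exact hb
  · intro h; exact ⟨_, h, rfl⟩

theorem eds_rev (l : List (V × E × V)) : eds (rev l) = (eds l).reverse := by
  simp [eds, rev, List.map_reverse, Function.comp_def]

theorem Wk.rev {l : List (V × E × V)} {x z : V} (h : G.Wk x z l) : G.Wk z x (rev l) := by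
  induction h with
  | nil => exact Wk.nil _
  | cons he _ ih =>
    simp only [Grapht.rev, List.map_cons, List.reverse_cons]
    refine ih.append (Wk.cons ?_ (Wk.nil _))
    rw [he, Sym2.eq_swap]

/-- Vertices of an arc list ending in `z`. -/
def vts (l : List (V × E × V)) (z : V) : List V := l.map (fun a => a.1) ++ [z]

theorem vts_cons (a : V × E × V) (l : List (V × E × V)) (z : V) :
    vts (a :: l) z = a.1 :: vts l z := by simp [vts]

theorem Wk.start_mem {l : List (V × E × V)} {x z : V} (h : G.Wk x z l) : x ∈ vts l z := by
  cases h <;> simp [vts]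

theorem Wk.mem_vts {l : List (V × E × V)} {x z : V} (h : G.Wk x z l) {a : V × E × V}
    (ha : a ∈ l) : a.1 ∈ vts l z ∧ a.2.2 ∈ vts l z := by
  induction h with
  | nil => simp at ha
  | cons he hw ih =>
    rw [vts_cons]
    rcases List.mem_cons.1 ha with rfl | ha
    · exact ⟨by simp, List.mem_cons_of_mem _ hw.start_mem⟩
    · exact ⟨List.mem_cons_of_mem _ (ih ha).1, List.mem_cons_of_mem _ (ih ha).2⟩

theorem Wk.extract {l : List (V × E × V)} {x z : V} (h : G.Wk x z l) :
    ∃ l', (∀ a ∈ l', a ∈ l) ∧ G.Wk x z l' ∧ (vts l' z).Nodup := by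
  induction h with
  | nil x => exact ⟨[], by simp, Wk.nil _, by simp [vts]⟩
  | @cons x y z e l he _ ih =>
    obtain ⟨l', hs, hw, hn⟩ := ih
    by_cases hx : x ∈ vts l' z
    · simp only [vts, List.mem_append, List.mem_map, List.mem_singleton] at hx
      rcases hx with ⟨a, ha, rfl⟩ | rfl
      · obtain ⟨l1, l2, rfl⟩ := List.append_of_mem ha
        obtain ⟨-, h2, h3⟩ := hw.split
        refine ⟨a :: l2, ?_, Wk.cons (e := a.2.1) h2 h3, ?_⟩
        · intro b hb
          exact List.mem_cons_of_mem _ (hs b (by simp only [List.mem_append]; exact Or.inr hb))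
        · refine hn.sublist ?_
          simp only [vts, List.map_append, List.append_assoc]
          exact List.sublist_append_right _ _
      · exact ⟨[], by simp, Wk.nil _, by simp [vts]⟩
    · refine ⟨(x, e, y) :: l', ?_, Wk.cons he hw, ?_⟩
      · intro b hb
        rcases List.mem_cons.1 hb with rfl | hb
        · simp
        · exact List.mem_cons_of_mem _ (hs b hb)
      · rw [vts_cons]; exact List.nodup_cons.2 ⟨hx, hn⟩

theorem Wk.eds_nodup {l : List (V × E × V)} {x z : V} (h : G.Wk x z l) (hn : (vts l z).Nodup) :
    (eds l).Nodup := by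
  induction h with
  | nil => simp [eds]
  | @cons x y z e l he hw ih =>
    rw [vts_cons, List.nodup_cons] at hn
    rw [eds_cons, List.nodup_cons]
    refine ⟨?_, ih hn.2⟩
    intro hm
    obtain ⟨a, ha, hae⟩ := mem_eds.1 hm
    have h1 := hw.arc ha
    rw [hae] at h1
    simp only at h1
    rw [he] at h1
    have h2 := hw.mem_vts ha
    rcases Sym2.eq_iff.1 h1 with ⟨h3, h4⟩ | ⟨h3, h4⟩
    · exact hn.1 (by simpa [h3] using h2.1)
    · exact hn.1 (by simpa [h3] using h2.2)

theorem Wk.target_ne {l : List (V × E × V)} {x z : V} (h : G.Wk x z l) (hn : (vts l z).Nodup) :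
    ∀ a ∈ l, a.2.2 ≠ x := by
  cases h with
  | nil => simp
  | cons he hw =>
    rw [vts_cons, List.nodup_cons] at hn
    intro a ha hax
    rcases List.mem_cons.1 ha with rfl | ha
    · have h9 := hw.start_mem
      simp only at hax
      rw [hax] at h9
      exact hn.1 h9
    · exact hn.1 (by simpa [hax] using (hw.mem_vts ha).2)

theorem mem_edgeCut_iff {X : Set V} {e : E} {a b : V} (h : G.I e = s(a, b)) :
    e ∈ G.edgeCut X ↔ (a ∈ X ∧ b ∉ X) ∨ (b ∈ X ∧ a ∉ X) := by
  constructor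
  · rintro ⟨p, q, h1, h2, h3⟩
    rw [h] at h1
    rcases Sym2.eq_iff.1 h1 with ⟨rfl, rfl⟩ | ⟨rfl, rfl⟩
    · exact Or.inl ⟨h2, h3⟩
    · exact Or.inr ⟨h2, h3⟩
  · rintro (⟨h1, h2⟩ | ⟨h1, h2⟩)
    · exact ⟨a, b, h, h1, h2⟩
    · exact ⟨b, a, by rw [h, Sym2.eq_swap], h1, h2⟩

theorem Wk.exists_cross {l : List (V × E × V)} {x z : V} {Y : Set V} (h : G.Wk x z l)
    (hx : x ∉ Y) (hz : z ∈ Y) : ∃ a ∈ l, a.1 ∉ Y ∧ a.2.2 ∈ Y := by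
  induction h with
  | nil => exact absurd hz hx
  | @cons x y z e l he hw ih =>
    by_cases hy : y ∈ Y
    · exact ⟨(x, e, y), by simp, hx, hy⟩
    · obtain ⟨a, ha, h⟩ := ih hy hz
      exact ⟨a, List.mem_cons_of_mem _ ha, h⟩

theorem Wk.stay_out {l : List (V × E × V)} {x z : V} {X : Set V} (h : G.Wk x z l)
    (hc : ∀ a ∈ l, ¬ (a.1 ∉ X ∧ a.2.2 ∈ X)) (hx : x ∉ X) : ∀ a ∈ l, a.1 ∉ X ∧ a.2.2 ∉ X := by
  induction h with
  | nil => simp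
  | @cons x y z e l he hw ih =>
    have hy : y ∉ X := fun hy => hc (x, e, y) (by simp) ⟨hx, hy⟩
    intro a ha
    rcases List.mem_cons.1 ha with rfl | ha
    · exact ⟨hx, hy⟩
    · exact ih (fun b hb => hc b (List.mem_cons_of_mem _ hb)) hy a ha

theorem Wk.out_split {l : List (V × E × V)} {x z : V} {X : Set V} (h : G.Wk x z l)
    (hc : ∀ a ∈ l, ¬ (a.1 ∉ X ∧ a.2.2 ∈ X)) (hx : x ∈ X) (hz : z ∉ X) :
    ∃ A a B, l = A ++ a :: B ∧ a.1 ∈ X ∧ a.2.2 ∉ X ∧ (∀ b ∈ A, b.1 ∈ X ∧ b.2.2 ∈ X) ∧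
      ∀ b ∈ B, b.1 ∉ X ∧ b.2.2 ∉ X := by
  induction h with
  | nil => exact absurd hx hz
  | @cons x y z e l he hw ih =>
    have hc' : ∀ b ∈ l, ¬ (b.1 ∉ X ∧ b.2.2 ∈ X) := fun b hb => hc b (List.mem_cons_of_mem _ hb)
    by_cases hy : y ∈ X
    · obtain ⟨A, a, B, rfl, h1, h2, h3, h4⟩ := ih hc' hy hz
      refine ⟨(x, e, y) :: A, a, B, rfl, h1, h2, ?_, h4⟩
      intro b hb
      rcases List.mem_cons.1 hb with rfl | hb
      · exact ⟨hx, hy⟩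
      · exact h3 b hb
    · exact ⟨[], (x, e, y), l, rfl, hx, hy, by simp, hw.stay_out hc' hy⟩

/-- In an out-only walk there is exactly one cut edge. -/
theorem Wk.cut_edge_unique {l : List (V × E × V)} {x z : V} {X : Set V} (h : G.Wk x z l)
    (hc : ∀ a ∈ l, ¬ (a.1 ∉ X ∧ a.2.2 ∈ X)) (hx : x ∈ X) (hz : z ∉ X) {e e' : E}
    (he : e ∈ eds l) (he' : e' ∈ eds l) (hX : e ∈ G.edgeCut X) (hX' : e' ∈ G.edgeCut X) :
    e = e' := by
  obtain ⟨A, a, B, rfl, h1, h2, h3, h4⟩ := h.out_split hc hx hz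
  have key : ∀ e ∈ eds (A ++ a :: B), e ∈ G.edgeCut X → e = a.2.1 := by
    intro e he hX
    obtain ⟨b, hb, rfl⟩ := mem_eds.1 he
    have hI := h.arc hb
    rw [mem_edgeCut_iff hI] at hX
    rcases List.mem_append.1 hb with hb | hb
    · have := h3 b hb; tauto
    · rcases List.mem_cons.1 hb with rfl | hb
      · rfl
      · have := h4 b hb; tauto
  rw [key e he hX, key e' he' hX']

theorem IsWalk.toWk {vs : List V} {es : List E} (h : G.IsWalk vs es) :
    ∀ x z, vs.head? = some x → vs.getLast? = some z →
      ∃ l, G.Wk x z l ∧ vts l z = vs ∧ eds l = es := by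
  induction h with
  | nil v =>
    intro x z hx hz
    simp at hx hz
    subst hx; subst hz
    exact ⟨[], Wk.nil _, by simp [vts], by simp [eds]⟩
  | @cons p w vs e es he hw ih =>
    intro x z hx hz
    simp at hx
    subst hx
    obtain ⟨l, h1, h2, h3⟩ := ih w z rfl (by simpa using hz)
    exact ⟨(p, e, w) :: l, Wk.cons he h1, by rw [vts_cons, h2], by rw [eds_cons, h3]⟩

theorem Wk.toIsWalk {l : List (V × E × V)} {x z : V} (h : G.Wk x z l) :
    G.IsWalk (vts l z) (eds l) ∧ (vts l z).head? = some x ∧ (vts l z).getLast? = some z := by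
  induction h with
  | nil x => exact ⟨by simpa [vts, eds] using IsWalk.nil x, by simp [vts], by simp [vts]⟩
  | @cons x y z e l he hw ih =>
    obtain ⟨h1, h2, h3⟩ := ih
    refine ⟨?_, by simp [vts_cons], by unfold vts; exact List.getLast?_concat⟩
    rw [vts_cons, eds_cons]
    cases hv : vts l z with
    | nil => rw [hv] at h2; simp at h2
    | cons p q =>
      rw [hv] at h2 h1
      simp at h2
      subst h2
      exact IsWalk.cons he h1

theorem Path.isAB (P : G.Path) (s t : V) (h1 : P.first = s) (h2 : P.last = t) :
    G.IsABPath {s} {t} P := by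
  refine ⟨h1, h2, ?_⟩
  intro v hv
  have hn := P.nodup
  have hh := P.head_eq
  have hl := P.getLast_eq
  rw [h1] at hh
  rw [h2] at hl
  unfold Path.inner at hv
  cases hvs : P.verts with
  | nil => rw [hvs] at hh; simp at hh
  | cons p q =>
    rw [hvs] at hh hl hn hv
    simp at hh
    subst hh
    simp only [List.drop_succ_cons, List.drop_zero] at hv
    rw [List.nodup_cons] at hn
    have hq : q ≠ [] := by rintro rfl; simp at hv
    rintro (hvs | hvt)
    · simp at hvs; subst hvs
      exact hn.1 (List.dropLast_subset _ hv)
    · simp at hvt; subst hvt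
      rw [List.getLast?_cons_of_ne_nil hq, List.getLast?_eq_some_getLast hq] at hl
      simp at hl
      have h3 := List.dropLast_append_getLast hq
      rw [hl] at h3
      rw [← h3] at hn
      have := hn.2
      rw [List.nodup_append] at this
      exact this.2.2 v hv v (by simp) rfl

theorem Wk.toPath {l : List (V × E × V)} {x z : V} (h : G.Wk x z l) :
    ∃ P : G.Path, G.IsABPath {x} {z} P ∧ ∃ l', G.Wk x z l' ∧ P.edges = eds l' ∧
      ∀ a ∈ l', a ∈ l := by
  obtain ⟨l', h1, h2, h3⟩ := h.extract
  obtain ⟨h4, h5, h6⟩ := h2.toIsWalk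
  let P : G.Path := ⟨x, z, vts l' z, eds l', h4, h3, h5, h6⟩
  exact ⟨P, P.isAB x z rfl rfl, l', h2, rfl, h1⟩

theorem Path.toWk (P : G.Path) {s t : V} (h : G.IsABPath {s} {t} P) :
    ∃ l, G.Wk s t l ∧ (vts l t).Nodup ∧ eds l = P.edges := by
  obtain ⟨h1, h2, -⟩ := h
  simp only [Set.mem_singleton_iff] at h1 h2
  obtain ⟨l, h3, h4, h5⟩ := P.isWalk.toWk s t (h1 ▸ P.head_eq) (h2 ▸ P.getLast_eq)
  exact ⟨l, h3, h4 ▸ P.nodup, h5⟩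

/-- Key lemma: walks crossing `δ(X)` only outwards make it an Erdős–Menger cut. -/
theorem em_of_walks {s t : V} {X : Set V} (hs : s ∈ X) (ht : t ∉ X)
    (W : Set (List (V × E × V))) (hW : ∀ l ∈ W, G.Wk s t l)
    (hd : W.Pairwise (fun l l' => ∀ e ∈ eds l, e ∉ eds l'))
    (hc : ∀ l ∈ W, ∀ a ∈ l, ¬ (a.1 ∉ X ∧ a.2.2 ∈ X))
    (hcov : ∀ e ∈ G.edgeCut X, ∃ l ∈ W, e ∈ eds l) :
    G.IsEMABCut {s} {t} (G.edgeCut X) := by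
  have cross : ∀ l, G.Wk s t l → ∃ e ∈ G.edgeCut X, e ∈ eds l := by
    intro l hl
    obtain ⟨a, ha, h1, h2⟩ := hl.exists_cross (Y := Xᶜ) (by simpa using hs) ht
    refine ⟨a.2.1, ?_, mem_eds.2 ⟨a, ha, rfl⟩⟩
    rw [mem_edgeCut_iff (hl.arc ha)]
    exact Or.inl ⟨by simpa using h1, h2⟩
  refine ⟨?_, ?_⟩
  · intro P hP
    obtain ⟨l, h1, -, h3⟩ := P.toWk hP
    rw [← h3]; exact cross l h1
  · have : ∀ l : W, ∃ P : G.Path, G.IsABPath {s} {t} P ∧ ∃ l', G.Wk s t l' ∧ P.edges = eds l' ∧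
      ∀ a ∈ l', a ∈ l.1 := fun l => (hW l.1 l.2).toPath
    choose p hp q hq hpq hsub using this
    have hsub' : ∀ l e, e ∈ (p l).edges → e ∈ eds l.1 := by
      intro l e he
      rw [hpq, mem_eds] at he
      obtain ⟨a, ha, rfl⟩ := he
      exact mem_eds.2 ⟨a, hsub l a ha, rfl⟩
    refine ⟨Set.range p, ?_, ?_, ?_, ?_⟩
    · rintro _ ⟨l, rfl⟩ _ ⟨l', rfl⟩ hne e he he'
      have hll : l.1 ≠ l'.1 := fun h => hne (by rw [Subtype.ext h])
      exact hd l.2 l'.2 hll e (hsub' l e he) (hsub' l' e he')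
    · rintro _ ⟨l, rfl⟩; exact hp l
    · rintro _ ⟨l, rfl⟩
      obtain ⟨e, he, he'⟩ := cross _ (hq l)
      rw [← hpq] at he'
      refine ⟨e, ⟨he, he'⟩, ?_⟩
      rintro e2 ⟨h1, h2⟩
      exact (hW _ l.2).cut_edge_unique (hc _ l.2) hs ht (hsub' l _ h2) (hsub' l _ he') h1 he
    · intro e he
      obtain ⟨l, hl, hel⟩ := hcov e he
      refine ⟨_, ⟨⟨l, hl⟩, rfl⟩, ?_⟩
      obtain ⟨e2, he2, he2'⟩ := cross _ (hq ⟨l, hl⟩)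
      rw [← hpq] at he2'
      have := (hW _ hl).cut_edge_unique (hc _ hl) hs ht hel (hsub' ⟨l, hl⟩ _ he2') he he2
      rw [this]; exact he2'


/-- A trail from `S` to `T` with edges in `F`, never returning to `S`. -/
structure Tr (G : Grapht V E) (S T : Set V) (F : Set E) (l : List (V × E × V)) : Prop where
  wk : ∃ a ∈ S, ∃ b ∈ T, G.Wk a b l
  nodup : (eds l).Nodup
  sub : ∀ a ∈ l, a.2.1 ∈ F
  out : ∀ a ∈ l, a.2.2 ∉ S

/-- Pairwise edge-disjoint trails. -/
def Sys (G : Grapht V E) (S T : Set V) (F : Set E) (W : Set (List (V × E × V))) : Prop :=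
  (∀ l ∈ W, G.Tr S T F l) ∧ W.Pairwise (fun l l' => ∀ e ∈ eds l, e ∉ eds l')

/-- Covered edges. -/
def Cov (W : Set (List (V × E × V))) (e : E) : Prop := ∃ l ∈ W, e ∈ eds l

/-- A system covering all but one edge `e0` of `δ(S)`. -/
structure Cfg (G : Grapht V E) (S T : Set V) (F : Set E) (W : Set (List (V × E × V)))
    (e0 : E) (a0 y0 : V) : Prop where
  sys : G.Sys S T F W
  inc : G.I e0 = s(a0, y0)
  ha : a0 ∈ S
  hy : y0 ∉ S
  hF : e0 ∈ F
  unc : ¬ Cov W e0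
  cov : ∀ e ∈ G.edgeCut S, e ∈ F → e ≠ e0 → Cov W e

/-- Free step. -/
def Fs (G : Grapht V E) (S : Set V) (F : Set E) (W : Set (List (V × E × V))) (x z : V) : Prop :=
  x ∉ S ∧ z ∉ S ∧ ∃ e ∈ F, G.I e = s(x, z) ∧ ¬ Cov W e

/-- Residual step. -/
def Rs (G : Grapht V E) (S : Set V) (F : Set E) (W : Set (List (V × E × V))) (x z : V) : Prop :=
  x ∉ S ∧ z ∉ S ∧ ∃ e ∈ F, G.I e = s(x, z) ∧ (¬ Cov W e ∨ ∃ l ∈ W, (z, e, x) ∈ l)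

/-- Chains of residual steps. -/
def Rc (G : Grapht V E) (S : Set V) (F : Set E) (W : Set (List (V × E × V))) :
    ℕ → V → V → Prop
  | 0, x, z => x = z
  | n + 1, x, z => ∃ y, G.Rs S F W x y ∧ Rc G S F W n y z

variable {S T : Set V} {F : Set E} {W : Set (List (V × E × V))}

theorem exists_rc {x z : V} (h : Relation.ReflTransGen (G.Rs S F W) x z) :
    ∃ n, G.Rc S F W n x z := by
  induction h using Relation.ReflTransGen.head_induction_on with
  | refl => exact ⟨0, rfl⟩
  | head h1 _ ih =>
    obtain ⟨n, hn⟩ := ih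
    exact ⟨n + 1, _, h1, hn⟩

theorem Tr.eq_cons {l : List (V × E × V)} (h : G.Tr S T F l) (hST : Disjoint S T) :
    ∃ a e y R, l = (a, e, y) :: R ∧ G.I e = s(a, y) ∧ a ∈ S ∧ y ∉ S ∧ e ∈ F ∧
      (∃ b ∈ T, G.Wk y b R) := by
  obtain ⟨a, ha, b, hb, hw⟩ := h.wk
  cases hw with
  | nil => exact absurd hb (Set.disjoint_left.1 hST ha)
  | @cons _ y _ e R he hw =>
    exact ⟨a, e, y, R, rfl, he, ha, h.out _ List.mem_cons_self, h.sub (a, e, y) (by simp), b, hb, hw⟩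

theorem Tr.tail_out {a : V × E × V} {R : List (V × E × V)} (h : G.Tr S T F (a :: R)) :
    ∀ b ∈ R, b.1 ∉ S ∧ b.2.2 ∉ S := by
  obtain ⟨p, hp, q, hq, hw⟩ := h.wk
  cases hw with
  | cons he hw =>
    refine hw.stay_out ?_ (h.out _ List.mem_cons_self)
    intro b hb hb'
    exact h.out b (List.mem_cons_of_mem _ hb) hb'.2

theorem Tr.cut_edge {a : V × E × V} {R : List (V × E × V)} (h : G.Tr S T F (a :: R)) {e : E}
    (he : e ∈ eds (a :: R)) (hS : e ∈ G.edgeCut S) : e = a.2.1 := by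
  obtain ⟨b, hb, rfl⟩ := mem_eds.1 he
  obtain ⟨p, hp, q, hq, hw⟩ := h.wk
  rcases List.mem_cons.1 hb with rfl | hb'
  · rfl
  · have := h.tail_out b hb'
    rw [mem_edgeCut_iff (hw.arc hb)] at hS
    tauto

theorem arc_eq_of_nodup {l : List (V × E × V)} (h : (eds l).Nodup) {a b : V × E × V}
    (ha : a ∈ l) (hb : b ∈ l) (hab : a.2.1 = b.2.1) : a = b :=
  List.inj_on_of_nodup_map h ha hb hab

theorem free_walk {x z : V} (h : Relation.ReflTransGen (G.Fs S F W) x z) :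
    ∃ Z, G.Wk x z Z ∧ (eds Z).Nodup ∧ ∀ a ∈ Z, a.2.1 ∈ F ∧ ¬ Cov W a.2.1 ∧ a.1 ∉ S ∧ a.2.2 ∉ S := by
  have : ∃ Z, G.Wk x z Z ∧ ∀ a ∈ Z, a.2.1 ∈ F ∧ ¬ Cov W a.2.1 ∧ a.1 ∉ S ∧ a.2.2 ∉ S := by
    induction h using Relation.ReflTransGen.head_induction_on with
    | refl => exact ⟨[], Wk.nil _, by simp⟩
    | @head p q h1 _ ih =>
      obtain ⟨Z, hZ, hZ'⟩ := ih
      obtain ⟨hp, hq, e, he, hI, hc⟩ := h1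
      refine ⟨(p, e, q) :: Z, Wk.cons hI hZ, ?_⟩
      intro a ha
      rcases List.mem_cons.1 ha with rfl | ha
      · exact ⟨he, hc, hp, hq⟩
      · exact hZ' a ha
  obtain ⟨Z, hZ, hZ'⟩ := this
  obtain ⟨Z2, h1, h2, h3⟩ := hZ.extract
  exact ⟨Z2, h2, h2.eds_nodup h3, fun a ha => hZ' a (h1 a ha)⟩

theorem walk_free {x z : V} {Z : List (V × E × V)} (h : G.Wk x z Z)
    (hZ : ∀ a ∈ Z, a.2.1 ∈ F ∧ ¬ Cov W a.2.1 ∧ a.1 ∉ S ∧ a.2.2 ∉ S) :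
    Relation.ReflTransGen (G.Fs S F W) x z ∧
      ∀ a ∈ Z, Relation.ReflTransGen (G.Fs S F W) x a.1 ∧
        Relation.ReflTransGen (G.Fs S F W) x a.2.2 := by
  induction h with
  | nil => exact ⟨Relation.ReflTransGen.refl, by simp⟩
  | @cons x y z e l he hw ih =>
    obtain ⟨h1, h2⟩ := ih (fun a ha => hZ a (List.mem_cons_of_mem _ ha))
    have h0 := hZ (x, e, y) (by simp)
    have hs : G.Fs S F W x y := ⟨h0.2.2.1, h0.2.2.2, e, h0.1, he, h0.2.1⟩
    refine ⟨Relation.ReflTransGen.head hs h1, ?_⟩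
    intro a ha
    rcases List.mem_cons.1 ha with rfl | ha
    · exact ⟨Relation.ReflTransGen.refl, Relation.ReflTransGen.single hs⟩
    · exact ⟨Relation.ReflTransGen.head hs (h2 a ha).1, Relation.ReflTransGen.head hs (h2 a ha).2⟩

theorem sys_insert {N : List (V × E × V)} (h : G.Sys S T F W) (hN : G.Tr S T F N)
    (hd : ∀ l ∈ W, ∀ e ∈ eds l, e ∉ eds N) : G.Sys S T F (insert N W) := by
  refine ⟨?_, ?_⟩
  · rintro l (rfl | hl)
    · exact hN
    · exact h.1 l hl
  · rintro l (rfl | hl) l' (rfl | hl') hne e he he'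
    · exact hne rfl
    · exact hd l' hl' e he' he
    · exact hd l hl e he he'
    · exact h.2 hl hl' hne e he he'

theorem Sys.diff (h : G.Sys S T F W) (l : List (V × E × V)) : G.Sys S T F (W \ {l}) :=
  ⟨fun l' hl' => h.1 l' hl'.1, h.2.mono Set.sdiff_subset⟩

/-- The new trail used in the exchange step. -/
theorem Cfg.newTr {e0 : E} {a0 y0 : V} (c : G.Cfg S T F W e0 a0 y0) {y b : V}
    {Z B : List (V × E × V)} (hZ : G.Wk y0 y Z) (hn : (eds Z).Nodup)
    (hZ' : ∀ a ∈ Z, a.2.1 ∈ F ∧ ¬ Cov W a.2.1 ∧ a.1 ∉ S ∧ a.2.2 ∉ S)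
    (hb : b ∈ T) (hB : G.Wk y b B) (hBn : (eds B).Nodup)
    (hB' : ∀ a ∈ B, a.2.1 ∈ F ∧ a.2.2 ∉ S) (hBc : ∀ e ∈ eds B, Cov W e) :
    G.Tr S T F ((a0, e0, y0) :: (Z ++ B)) := by
  refine ⟨⟨a0, c.ha, b, hb, Wk.cons c.inc (hZ.append hB)⟩, ?_, ?_, ?_⟩
  · rw [eds_cons, eds_append, List.nodup_cons]
    refine ⟨?_, ?_⟩
    · intro h
      rcases List.mem_append.1 h with h | h
      · obtain ⟨a, ha, hae⟩ := mem_eds.1 h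
        have h1 := hZ.arc ha
        rw [hae] at h1
        simp only at h1
        rw [c.inc] at h1
        have h2 := hZ' a ha
        have h3 := c.ha
        rcases Sym2.eq_iff.1 h1 with ⟨h4, h5⟩ | ⟨h4, h5⟩
        · rw [h4] at h3; exact h2.2.2.1 h3
        · rw [h4] at h3; exact h2.2.2.2 h3
      · exact c.unc (hBc _ h)
    · rw [List.nodup_append]
      refine ⟨hn, hBn, ?_⟩
      rintro e he e' he' rfl
      obtain ⟨a, ha, rfl⟩ := mem_eds.1 he
      exact (hZ' a ha).2.1 (hBc _ he')
  · intro a ha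
    rcases List.mem_cons.1 ha with rfl | ha
    · exact c.hF
    · rcases List.mem_append.1 ha with ha | ha
      · exact (hZ' a ha).1
      · exact (hB' a ha).1
  · intro a ha
    rcases List.mem_cons.1 ha with rfl | ha
    · exact c.hy
    · rcases List.mem_append.1 ha with ha | ha
      · exact (hZ' a ha).2.2.2
      · exact (hB' a ha).2

theorem Cfg.swap {e0 : E} {a0 y0 : V} (c : G.Cfg S T F W e0 a0 y0) (hST : Disjoint S T) {y : V}
    {Z : List (V × E × V)} (hZ : G.Wk y0 y Z) (hn : (eds Z).Nodup)
    (hZ' : ∀ a ∈ Z, a.2.1 ∈ F ∧ ¬ Cov W a.2.1 ∧ a.1 ∉ S ∧ a.2.2 ∉ S)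
    {l A B R : List (V × E × V)} {z : V} {e : E} (hl : l ∈ W) (hlA : l = A ++ (z, e, y) :: B)
    {a1 : V} {e1 : E} {y1 : V} (hlR : l = (a1, e1, y1) :: R) :
    G.Cfg S T F (insert ((a0, e0, y0) :: (Z ++ B)) (W \ {l})) e1 a1 y1 := by
  have htr := c.sys.1 l hl
  obtain ⟨p, hp, q, hq, hw⟩ := htr.wk
  have hnd := htr.nodup
  have hBl : ∀ e ∈ eds B, e ∈ eds l := by
    intro e he; rw [hlA, eds_append, eds_cons]; simp [he]
  have hBc : ∀ e ∈ eds B, Cov W e := fun e he => ⟨l, hl, hBl e he⟩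
  have hBnd : (eds B).Nodup := by
    rw [hlA, eds_append, eds_cons, List.nodup_append] at hnd
    exact (List.nodup_cons.1 hnd.2.1).2
  have hwB : G.Wk y q B := by rw [hlA] at hw; exact hw.split.2.2
  have hN := c.newTr hZ hn hZ' hq hwB hBnd
    (fun a ha => ⟨htr.sub a (by rw [hlA]; simp [ha]), htr.out a (by rw [hlA]; simp [ha])⟩) hBc
  have hNm : ∀ e, e ∈ eds ((a0, e0, y0) :: (Z ++ B)) → e = e0 ∨ e ∈ eds Z ∨ e ∈ eds B := by
    intro e he; rw [eds_cons, eds_append] at he; simpa using he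
  have he1l : e1 ∈ eds l := by rw [hlR, eds_cons]; simp
  obtain ⟨a1', e1', y1', R', h1, h2, h3, h4, h5, -⟩ := htr.eq_cons hST
  rw [hlR] at h1
  simp only [List.cons.injEq, Prod.mk.injEq] at h1
  obtain ⟨⟨rfl, rfl, rfl⟩, rfl⟩ := h1
  refine ⟨sys_insert (c.sys.diff l) hN ?_, h2, h3, h4, h5, ?_, ?_⟩
  · intro l' hl' e he heN
    rcases hNm e heN with rfl | h | h
    · exact c.unc ⟨l', hl'.1, he⟩
    · obtain ⟨a, ha, rfl⟩ := mem_eds.1 h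
      exact (hZ' a ha).2.1 ⟨l', hl'.1, he⟩
    · exact c.sys.2 hl'.1 hl hl'.2 e he (hBl e h)
  · rintro ⟨l', rfl | hl', he⟩
    · rcases hNm _ he with rfl | h | h
      · exact c.unc ⟨l, hl, he1l⟩
      · obtain ⟨a, ha, rfl⟩ := mem_eds.1 h
        exact (hZ' a ha).2.1 ⟨l, hl, he1l⟩
      · cases A with
        | nil =>
          rw [hlR] at hlA
          simp only [List.nil_append, List.cons.injEq, Prod.mk.injEq] at hlA
          obtain ⟨⟨rfl, rfl, rfl⟩, rfl⟩ := hlA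
          rw [hlR, eds_cons] at hnd
          exact (List.nodup_cons.1 hnd).1 h
        | cons a A =>
          have hh := hlA
          rw [hlR] at hh
          simp only [List.cons_append, List.cons.injEq] at hh
          obtain ⟨rfl, hh⟩ := hh
          rw [hlA, List.cons_append, eds_cons] at hnd
          refine (List.nodup_cons.1 hnd).1 ?_
          rw [eds_append, eds_cons]; simp [h]
    · exact c.sys.2 hl'.1 hl hl'.2 e1 he he1l
  · intro e' he' heF hne
    by_cases h0 : e' = e0
    · subst h0
      exact ⟨_, Or.inl rfl, by rw [eds_cons]; simp⟩
    · obtain ⟨l', hl', hel'⟩ := c.cov e' he' heF h0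
      by_cases hll : l' = l
      · subst hll
        rw [hlR] at htr hel'
        exact absurd (htr.cut_edge hel' he') hne
      · exact ⟨l', Or.inr ⟨hl', hll⟩, hel'⟩

theorem Cfg.propagate (hST : Disjoint S T) (x : V) (n : ℕ) :
    ∀ (W : Set (List (V × E × V))) (e0 : E) (a0 y0 p : V), G.Cfg S T F W e0 a0 y0 →
      Relation.ReflTransGen (G.Fs S F W) y0 p → G.Rc S F W n p x →
      ∃ W' e' a' y', G.Cfg S T F W' e' a' y' ∧ Relation.ReflTransGen (G.Fs S F W') y' x := by
  induction n using Nat.strong_induction_on with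
  | _ n ih =>
  intro W e0 a0 y0 p c hp hrc
  by_cases hsh : ∃ m < n, ∃ p', Relation.ReflTransGen (G.Fs S F W) y0 p' ∧ G.Rc S F W m p' x
  · obtain ⟨m, hm, p', h1, h2⟩ := hsh
    exact ih m hm W e0 a0 y0 p' c h1 h2
  · cases n with
    | zero =>
      have : p = x := hrc
      subst this
      exact ⟨W, e0, a0, y0, c, hp⟩
    | succ n =>
      obtain ⟨z, hpz, hzx⟩ := hrc
      have hU : ∀ m ≤ n, ∀ v, G.Rc S F W m v x → ¬ Relation.ReflTransGen (G.Fs S F W) y0 v :=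
        fun m hm v hv hv' => hsh ⟨m, by omega, v, hv', hv⟩
      obtain ⟨hpS, hzS, e, heF, hI, hor⟩ := hpz
      rcases hor with hfree | ⟨l, hl, hal⟩
      · exact absurd (hp.tail ⟨hpS, hzS, e, heF, hI, hfree⟩) (hU n le_rfl z hzx)
      · obtain ⟨Z, hZ, hZn, hZ'⟩ := free_walk hp
        obtain ⟨A, B, hlA⟩ := List.append_of_mem hal
        have htr := c.sys.1 l hl
        obtain ⟨a1, e1, y1, R, hlR, hI1, ha1, hy1, he1F, -⟩ := htr.eq_cons hST
        have c' := c.swap hST hZ hZn hZ' hl hlA hlR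
        have hZU := (walk_free hZ hZ').2
        have hnd := htr.nodup
        have hcov' : ∀ e, Cov (insert ((a0, e0, y0) :: (Z ++ B)) (W \ {l})) e →
            e = e0 ∨ e ∈ eds Z ∨ e ∈ eds B ∨ ∃ l' ∈ W, l' ≠ l ∧ e ∈ eds l' := by
          rintro e ⟨l', rfl | hl', he⟩
          · rw [eds_cons, eds_append] at he
            simp only [List.mem_cons, List.mem_append] at he
            tauto
          · exact Or.inr (Or.inr (Or.inr ⟨l', hl'.1, hl'.2, he⟩))
        have hfreeA : ∀ b ∈ A ++ [(z, e, p)],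
            b.1 ∉ S → ¬ Cov (insert ((a0, e0, y0) :: (Z ++ B)) (W \ {l})) b.2.1 := by
          intro b hb hbS hc
          have hbl : b.2.1 ∈ eds l := by
            refine mem_eds.2 ⟨b, ?_, rfl⟩
            rw [hlA]; simp at hb ⊢; tauto
          rcases hcov' _ hc with h | h | h | ⟨l', h1, h2, h3⟩
          · exact c.unc (h ▸ ⟨l, hl, hbl⟩)
          · obtain ⟨a, ha, hae⟩ := mem_eds.1 h
            exact (hZ' a ha).2.1 (hae ▸ ⟨l, hl, hbl⟩)
          · have : l = (A ++ [(z, e, p)]) ++ B := by rw [hlA]; simp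
            rw [this, eds_append, List.nodup_append] at hnd
            exact hnd.2.2 _ (mem_eds.2 ⟨b, hb, rfl⟩) _ h rfl
          · exact c.sys.2 h1 hl h2 _ h3 hbl
        have hz' : Relation.ReflTransGen
            (G.Fs S F (insert ((a0, e0, y0) :: (Z ++ B)) (W \ {l}))) y1 z := by
          cases A with
          | nil =>
            rw [hlR] at hlA
            simp only [List.nil_append, List.cons.injEq, Prod.mk.injEq] at hlA
            obtain ⟨⟨rfl, rfl, rfl⟩, rfl⟩ := hlA
            exact absurd ha1 hzS
          | cons a A =>
            have hh := hlA
            rw [hlR] at hh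
            simp only [List.cons_append, List.cons.injEq] at hh
            obtain ⟨rfl, rfl⟩ := hh
            obtain ⟨p1, -, q1, -, hw⟩ := htr.wk
            rw [hlA] at hw
            have h1 := hw.split.1
            rw [hlR] at htr
            have h2 := htr.tail_out
            cases h1 with
            | cons _ h1 =>
              refine (walk_free h1 ?_).1
              intro b hb
              have h3 := h2 b (by simp [hb])
              exact ⟨htr.sub b (by simp [hb]), hfreeA b (by simp [hb]) h3.1, h3⟩
        have hrc' : ∀ m ≤ n, ∀ v, G.Rc S F W m v x →
            G.Rc S F (insert ((a0, e0, y0) :: (Z ++ B)) (W \ {l})) m v x := by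
          intro m
          induction m with
          | zero => intro _ v hv; exact hv
          | succ m ihm =>
            intro hm v hv
            have hvU := hU _ hm v hv
            obtain ⟨v', hvv, hv'⟩ := hv
            have hvU' := hU m (by omega) v' hv'
            refine ⟨v', ?_, ihm (by omega) v' hv'⟩
            obtain ⟨hvS, hvS', g, hgF, hgI, hgor⟩ := hvv
            refine ⟨hvS, hvS', g, hgF, hgI, ?_⟩
            have hg0 : g ≠ e0 := by
              rintro rfl
              rw [c.inc] at hgI
              have h3 := c.ha
              rcases Sym2.eq_iff.1 hgI with ⟨h4, h5⟩ | ⟨h4, h5⟩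
              · rw [h4] at h3; exact hvS h3
              · rw [h4] at h3; exact hvS' h3
            have hgZ : g ∉ eds Z := by
              intro hg
              obtain ⟨a, ha, rfl⟩ := mem_eds.1 hg
              have h1 := hZ.arc ha
              rw [hgI] at h1
              rcases Sym2.eq_iff.1 h1 with ⟨h4, h5⟩ | ⟨h4, h5⟩
              · exact hvU (h4 ▸ (hZU a ha).1)
              · exact hvU (h4 ▸ (hZU a ha).2)
            rcases hgor with hg | ⟨l', hl', hg⟩
            · left
              intro hc
              rcases hcov' _ hc with h | h | h | ⟨l', h1, h2, h3⟩
              · exact hg0 h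
              · exact hgZ h
              · refine hg ⟨l, hl, ?_⟩
                rw [hlA, eds_append, eds_cons]; simp [h]
              · exact hg ⟨l', h1, h3⟩
            · by_cases hll : l' = l
              · subst hll
                have : l' = (A ++ [(z, e, p)]) ++ B := by rw [hlA]; simp
                rw [this] at hg
                rcases List.mem_append.1 hg with hg | hg
                · left
                  exact hfreeA _ hg hvS'
                · right
                  exact ⟨_, Or.inl rfl, by simp [hg]⟩
              · right
                exact ⟨l', Or.inr ⟨hl', hll⟩, hg⟩
        exact ih n (by omega) _ _ _ _ z c' hz' (hrc' n le_rfl z hzx)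

/-- A system covering all of `δ(S)`. -/
def Full (G : Grapht V E) (S T : Set V) (F : Set E) (W : Set (List (V × E × V))) : Prop :=
  G.Sys S T F W ∧ ∀ e ∈ G.edgeCut S, e ∈ F → Cov W e

theorem Cfg.augment {e0 : E} {a0 y0 : V} (c : G.Cfg S T F W e0 a0 y0) (hST : Disjoint S T)
    {x : V} (hx : x ∈ T) (h : Relation.ReflTransGen (G.Rs S F W) y0 x) :
    ∃ W', G.Full S T F W' := by
  obtain ⟨n, hn⟩ := exists_rc h
  obtain ⟨W', e', a', y', c', hf⟩ :=
    Cfg.propagate hST x n W e0 a0 y0 y0 c Relation.ReflTransGen.refl hn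
  obtain ⟨Z, hZ, hZn, hZ'⟩ := free_walk hf
  have hN := c'.newTr hZ hZn hZ' hx (Wk.nil x) (by simp [eds]) (by simp) (by simp [eds])
  refine ⟨insert _ W', sys_insert c'.sys hN ?_, ?_⟩
  · intro l hl e he heN
    rw [List.append_nil, eds_cons] at heN
    rcases List.mem_cons.1 heN with rfl | h
    · exact c'.unc ⟨l, hl, he⟩
    · obtain ⟨a, ha, rfl⟩ := mem_eds.1 h
      exact (hZ' a ha).2.1 ⟨l, hl, he⟩
  · intro e he heF
    by_cases h0 : e = e'
    · subst h0
      exact ⟨_, Or.inl rfl, by rw [eds_cons]; simp⟩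
    · obtain ⟨l, hl, h⟩ := c'.cov e he heF h0
      exact ⟨l, Or.inr hl, h⟩

theorem Cfg.move {e0 : E} {a0 y0 : V} (c : G.Cfg S T F W e0 a0 y0) (hST : Disjoint S T)
    {x a : V} {em : E} (hem : em ∈ F) (hI : G.I em = s(a, x)) (ha : a ∈ S) (hx : x ∉ S)
    (h : Relation.ReflTransGen (G.Rs S F W) y0 x) :
    ∃ W' a' y', G.Cfg S T F W' em a' y' := by
  obtain ⟨n, hn⟩ := exists_rc h
  obtain ⟨W', e', a', y', c', hf⟩ :=
    Cfg.propagate hST x n W e0 a0 y0 y0 c Relation.ReflTransGen.refl hn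
  by_cases h0 : em = e'
  · subst h0
    exact ⟨W', a', y', c'⟩
  · obtain ⟨Z, hZ, hZn, hZ'⟩ := free_walk hf
    have hcut : em ∈ G.edgeCut S := ⟨a, x, hI, ha, hx⟩
    obtain ⟨l, hl, hel⟩ := c'.cov em hcut hem h0
    have htr := c'.sys.1 l hl
    obtain ⟨a1, e1, y1, R, hlR, hI1, ha1, hy1, -, -⟩ := htr.eq_cons hST
    have hlA := hlR
    rw [hlR] at htr hel
    have h1 : em = e1 := htr.cut_edge hel hcut
    subst h1
    rw [hI] at hI1
    rcases Sym2.eq_iff.1 hI1 with ⟨rfl, rfl⟩ | ⟨rfl, rfl⟩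
    · exact ⟨_, _, _, c'.swap hST hZ hZn hZ' hl (A := []) hlA hlA⟩
    · exact absurd ha1 hx


/-- The residually reachable set. -/
def Rch (G : Grapht V E) (S : Set V) (F : Set E) (W : Set (List (V × E × V))) (y0 : V) : Set V :=
  {x | Relation.ReflTransGen (G.Rs S F W) y0 x}

theorem Rch.notMem {y0 x : V} (hy : y0 ∉ S) (hx : x ∈ G.Rch S F W y0) : x ∉ S := by
  rcases Relation.ReflTransGen.cases_tail hx with h | ⟨z, -, h⟩
  · rw [h]; exact hy
  · exact h.2.1

theorem Rch.step {y0 x z : V} (hx : x ∈ G.Rch S F W y0) (h : G.Rs S F W x z) :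
    z ∈ G.Rch S F W y0 := Relation.ReflTransGen.tail hx h

/-- An arc of the system entering the reachable set from outside `S` cannot exist. -/
theorem Rch.no_enter {y0 : V} (hW : G.Sys S T F W) (hy : y0 ∉ S) {l : List (V × E × V)} (hl : l ∈ W)
    {a : V × E × V} (ha : a ∈ l) (h2 : a.2.2 ∈ G.Rch S F W y0) (h1 : a.1 ∉ S) :
    a.1 ∈ G.Rch S F W y0 := by
  have htr := hW.1 l hl
  obtain ⟨p, -, q, -, hw⟩ := htr.wk
  refine Rch.step h2 ⟨Rch.notMem hy h2, h1, a.2.1, htr.sub a ha, ?_, Or.inr ⟨l, hl, ha⟩⟩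
  rw [hw.arc ha, Sym2.eq_swap]

theorem delete_one {g : E} (hST : Disjoint S T) (h : G.Full S T F W) :
    (∃ W', G.Full S T (F \ {g}) W') ∨
    ∃ X, S ⊆ X ∧ Disjoint X T ∧ g ∈ G.edgeCut X ∧ g ∉ G.edgeCut S ∧
      (∀ e ∈ G.edgeCut X, e ∈ F → Cov W e) ∧
      ∀ l ∈ W, ∀ a ∈ l, ¬ (a.1 ∉ X ∧ a.2.2 ∈ X) := by
  obtain ⟨hsys, hcov⟩ := h
  by_cases hg : Cov W g
  swap
  · left
    refine ⟨W, ⟨?_, hsys.2⟩, fun e he heF => hcov e he heF.1⟩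
    intro l hl
    have htr := hsys.1 l hl
    refine ⟨htr.wk, htr.nodup, ?_, htr.out⟩
    intro a ha
    refine ⟨htr.sub a ha, ?_⟩
    rintro rfl
    exact hg ⟨l, hl, mem_eds.2 ⟨a, ha, rfl⟩⟩
  · obtain ⟨l, hl, hgl⟩ := hg
    have htr := hsys.1 l hl
    have hsys1 : G.Sys S T (F \ {g}) (W \ {l}) := by
      refine ⟨?_, (hsys.diff l).2⟩
      intro l' hl'
      have htr' := hsys.1 l' hl'.1
      refine ⟨htr'.wk, htr'.nodup, ?_, htr'.out⟩
      intro a ha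
      refine ⟨htr'.sub a ha, ?_⟩
      rintro rfl
      exact hsys.2 hl'.1 hl hl'.2 _ (mem_eds.2 ⟨a, ha, rfl⟩) hgl
    obtain ⟨a0, e0, y0, R, hlR, hI, ha0, hy0, heF, -⟩ := htr.eq_cons hST
    have hcov1 : ∀ e ∈ G.edgeCut S, e ∈ F → e ≠ e0 → Cov (W \ {l}) e := by
      intro e he heF hne
      obtain ⟨l', hl', hel'⟩ := hcov e he heF
      refine ⟨l', ⟨hl', ?_⟩, hel'⟩
      rintro rfl
      rw [hlR] at htr hel'
      exact hne (htr.cut_edge hel' he)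
    by_cases hgS : g ∈ G.edgeCut S
    · left
      have hge : g = e0 := by
        rw [hlR] at htr hgl
        exact htr.cut_edge hgl hgS
      exact ⟨W \ {l}, hsys1, fun e he heF => hcov1 e he heF.1 (fun h => heF.2 (by rw [h, hge]; rfl))⟩
    · have he0S : e0 ∈ G.edgeCut S := ⟨a0, y0, hI, ha0, hy0⟩
      have he0l : e0 ∈ eds l := by rw [hlR, eds_cons]; simp
      have c : G.Cfg S T (F \ {g}) (W \ {l}) e0 a0 y0 := by
        refine ⟨hsys1, hI, ha0, hy0, ⟨heF, ?_⟩, ?_, fun e he heF => hcov1 e he heF.1⟩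
        · intro h
          have h : e0 = g := h
          exact hgS (h ▸ he0S)
        · rintro ⟨l', hl', h⟩
          exact hsys.2 hl'.1 hl hl'.2 _ h he0l
      by_cases hT : ∃ x ∈ T, x ∈ G.Rch S (F \ {g}) (W \ {l}) y0
      · obtain ⟨x, hx, hx'⟩ := hT
        exact Or.inl (c.augment hST hx hx')
      · right
        set Y := G.Rch S (F \ {g}) (W \ {l}) y0 with hY
        have hy0Y : y0 ∈ Y := Relation.ReflTransGen.refl
        have hXc : ∀ e ∈ G.edgeCut (Y ∪ S), e ∈ F → e ≠ g → Cov (W \ {l}) e := by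
          rintro e ⟨x, z, hxz, hx, hz⟩ heF heg
          simp only [Set.mem_union, not_or] at hz
          by_contra hc
          by_cases hxS : x ∈ S
          · by_cases h0 : e = e0
            · subst h0
              rw [hI] at hxz
              rcases Sym2.eq_iff.1 hxz with ⟨h1, h2⟩ | ⟨h1, h2⟩
              · exact hz.1 (h2 ▸ hy0Y)
              · exact hz.2 (h1 ▸ ha0)
            · exact hc (hcov1 e ⟨x, z, hxz, hxS, hz.2⟩ heF h0)
          · have hxY : x ∈ Y := hx.resolve_right hxS
            exact hz.1 (Rch.step hxY ⟨hxS, hz.2, e, ⟨heF, heg⟩, hxz, Or.inl hc⟩)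
        have hXT : Disjoint (Y ∪ S) T := by
          rw [Set.disjoint_left]
          rintro x (hx | hx) hxT
          · exact hT ⟨x, hxT, hx⟩
          · exact Set.disjoint_left.1 hST hx hxT
        obtain ⟨p, hp, q, hq, hw⟩ := htr.wk
        have hlg : ∀ a ∈ l, a.2.1 ∈ G.edgeCut (Y ∪ S) → a.2.1 = g := by
          intro a ha hac
          by_contra hne
          obtain ⟨l', hl', h⟩ := hXc _ hac (htr.sub a ha) hne
          exact hsys.2 hl'.1 hl hl'.2 _ h (mem_eds.2 ⟨a, ha, rfl⟩)
        obtain ⟨a, ha, h1, h2⟩ := hw.exists_cross (Y := (Y ∪ S)ᶜ)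
          (by simp [hp]) (fun h => Set.disjoint_left.1 hXT h hq)
        have h1 : a.1 ∈ Y ∪ S := not_not.1 h1
        have hacut : a.2.1 ∈ G.edgeCut (Y ∪ S) := by
          rw [mem_edgeCut_iff (hw.arc ha)]; exact Or.inl ⟨h1, h2⟩
        have hag := hlg a ha hacut
        refine ⟨Y ∪ S, Set.subset_union_right, hXT, hag ▸ hacut, hgS, ?_, ?_⟩
        · intro e he heF
          by_cases heg : e = g
          · exact ⟨l, hl, heg ▸ hgl⟩
          · obtain ⟨l', hl', h⟩ := hXc e he heF heg
            exact ⟨l', hl'.1, h⟩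
        · rintro l' hl' b hb ⟨hb1, hb2⟩
          by_cases hll : l' = l
          · subst hll
            have hbc : b.2.1 ∈ G.edgeCut (Y ∪ S) := by
              rw [mem_edgeCut_iff (hw.arc hb)]; exact Or.inr ⟨hb2, hb1⟩
            have hbg := hlg b hb hbc
            have hab : a = b := arc_eq_of_nodup htr.nodup ha hb (hag.trans hbg.symm)
            subst hab
            exact h2 hb2
          · simp only [Set.mem_union, not_or] at hb1
            have hbS : b.2.2 ∉ S := (hsys.1 l' hl').out b hb
            exact hb1.1 (Rch.no_enter hsys1 hy0 (l := l') ⟨hl', hll⟩ hb (hb2.resolve_right hbS) hb1.2)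

/-- Parity condition. -/
def Par (G : Grapht V E) (S T : Set V) (F : Set E) : Prop :=
  ∀ Y : Set V, Disjoint Y S → Disjoint Y T →
    ¬ ((G.edgeCut Y ∩ F).Finite ∧ Odd (G.edgeCut Y ∩ F).ncard)

theorem Cfg.move_of_par {e0 : E} {a0 y0 : V} (c : G.Cfg S T F W e0 a0 y0) (hST : Disjoint S T)
    (hpar : G.Par S T F) :
    (∃ W', G.Full S T F W') ∨ ∃ em W' a' y', em ≠ e0 ∧ G.Cfg S T F W' em a' y' := by
  by_cases hT : ∃ x ∈ T, x ∈ G.Rch S F W y0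
  · obtain ⟨x, hx, hx'⟩ := hT
    exact Or.inl (c.augment hST hx hx')
  by_cases hM : ∃ e ∈ F, e ≠ e0 ∧ ∃ a ∈ S, ∃ x ∈ G.Rch S F W y0, G.I e = s(a, x)
  · obtain ⟨e, heF, hne, a, ha, x, hx, hI⟩ := hM
    obtain ⟨W', a', y', c'⟩ := c.move hST heF hI ha (Rch.notMem c.hy hx) hx
    exact Or.inr ⟨e, W', a', y', hne, c'⟩
  exfalso
  have hYS : Disjoint (G.Rch S F W y0) S :=
    Set.disjoint_left.2 fun x hx => Rch.notMem c.hy hx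
  have hYT : Disjoint (G.Rch S F W y0) T :=
    Set.disjoint_left.2 fun x hx hx' => hT ⟨x, hx', hx⟩
  have hy0Y : y0 ∈ G.Rch S F W y0 := Relation.ReflTransGen.refl
  have heq : G.edgeCut (G.Rch S F W y0) ∩ F = {e0} := by
    ext e
    simp only [Set.mem_inter_iff, Set.mem_singleton_iff]
    constructor
    · rintro ⟨⟨y, z, hI, hy, hz⟩, heF⟩
      by_contra hne
      have hyS := Rch.notMem c.hy hy
      by_cases hzS : z ∈ S
      · exact hM ⟨e, heF, hne, z, hzS, y, hy, by rw [hI, Sym2.eq_swap]⟩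
      · by_cases hc : Cov W e
        · obtain ⟨l, hl, hel⟩ := hc
          have htr := c.sys.1 l hl
          obtain ⟨p, hp, q, hq, hw⟩ := htr.wk
          have : ∃ b ∈ l, b.1 ∉ G.Rch S F W y0 ∧ b.2.2 ∈ G.Rch S F W y0 := by
            obtain ⟨a, ha, rfl⟩ := mem_eds.1 hel
            obtain ⟨A, B, rfl⟩ := List.append_of_mem ha
            obtain ⟨h1, h2, h3⟩ := hw.split
            have hpY : p ∉ G.Rch S F W y0 := fun h => Set.disjoint_left.1 hYS h hp
            rw [hI] at h2
            rcases Sym2.eq_iff.1 h2 with ⟨h4, h5⟩ | ⟨h4, h5⟩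
            · obtain ⟨b, hb, hb'⟩ := h1.exists_cross hpY (h4 ▸ hy)
              exact ⟨b, by simp [hb], hb'⟩
            · exact ⟨a, ha, h5 ▸ hz, h4 ▸ hy⟩
          obtain ⟨b, hb, hb1, hb2⟩ := this
          by_cases hbS : b.1 ∈ S
          · refine hM ⟨b.2.1, htr.sub b hb, ?_, b.1, hbS, b.2.2, hb2, hw.arc hb⟩
            intro h0
            exact c.unc ⟨l, hl, mem_eds.2 ⟨b, hb, h0⟩⟩
          · exact hb1 (Rch.no_enter c.sys c.hy hl hb hb2 hbS)
        · exact hz (Rch.step hy ⟨hyS, hzS, e, heF, hI, Or.inl hc⟩)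
    · rintro rfl
      refine ⟨⟨y0, a0, by rw [c.inc, Sym2.eq_swap], hy0Y, ?_⟩, c.hF⟩
      exact fun h => Set.disjoint_left.1 hYS h c.ha
  refine hpar _ hYS hYT ?_
  rw [heq]
  exact ⟨Set.finite_singleton _, by simp⟩

/-- Almost full systems. -/
def AF (G : Grapht V E) (S T : Set V) (F : Set E) : Prop :=
  ∃ W, G.Sys S T F W ∧ ∀ e ∈ G.edgeCut S, ∀ e' ∈ G.edgeCut S, e ∈ F → e' ∈ F →
    ¬ Cov W e → ¬ Cov W e' → e = e'

theorem AF.step1 (h : G.AF S T F) (hST : Disjoint S T) (hpar : G.Par S T F) {e : E}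
    (he : e ∈ G.edgeCut S) (heF : e ∈ F) :
    ∃ W, G.Sys S T F W ∧ Cov W e ∧ ∀ e ∈ G.edgeCut S, ∀ e' ∈ G.edgeCut S, e ∈ F → e' ∈ F →
    ¬ Cov W e → ¬ Cov W e' → e = e' := by
  obtain ⟨W, hW, hun⟩ := h
  by_cases hc : Cov W e
  · exact ⟨W, hW, hc, hun⟩
  · obtain ⟨a0, y0, hI, ha, hy⟩ := id he
    have c : G.Cfg S T F W e a0 y0 := by
      refine ⟨hW, hI, ha, hy, heF, hc, ?_⟩
      intro e' he' heF' hne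
      by_contra hc'
      exact hne (hun e' he' e he heF' heF hc' hc)
    rcases c.move_of_par hST hpar with ⟨W', h1, h2⟩ | ⟨em, W', a', y', hne, c'⟩
    · exact ⟨W', h1, h2 e he heF, fun e1 h3 _ _ h5 _ h7 _ => absurd (h2 e1 h3 h5) h7⟩
    · refine ⟨W', c'.sys, c'.cov e he heF hne.symm, ?_⟩
      have : ∀ e1 ∈ G.edgeCut S, e1 ∈ F → ¬ Cov W' e1 → e1 = em := by
        intro e1 h1 h2 h3
        by_contra h4
        exact h3 (c'.cov e1 h1 h2 h4)
      intro e1 h1 e2 h2 h3 h4 h5 h6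
      rw [this e1 h1 h3 h5, this e2 h2 h4 h6]

theorem Wk.cut_parity {l : List (V × E × V)} {x z : V} (h : G.Wk x z l) (Y : Set V)
    (hn : (eds l).Nodup) :
    (G.edgeCut Y ∩ {e | e ∈ eds l}).Finite ∧
      (Odd (G.edgeCut Y ∩ {e | e ∈ eds l}).ncard ↔ ¬ (x ∈ Y ↔ z ∈ Y)) := by
  have hfin : ∀ l : List (V × E × V), (G.edgeCut Y ∩ {e | e ∈ eds l}).Finite := fun l =>
    (List.finite_toSet (eds l)).subset Set.inter_subset_right
  refine ⟨hfin l, ?_⟩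
  induction h with
  | nil => simp [eds]
  | @cons x y z e l he hw ih =>
    rw [eds_cons, List.nodup_cons] at hn
    have ih := ih hn.2
    have hcut := mem_edgeCut_iff (X := Y) he
    by_cases hc : e ∈ G.edgeCut Y
    · have : G.edgeCut Y ∩ {e' | e' ∈ eds ((x, e, y) :: l)} =
          insert e (G.edgeCut Y ∩ {e' | e' ∈ eds l}) := by
        ext e'
        simp only [eds_cons, List.mem_cons, Set.mem_inter_iff, Set.mem_ofPred_eq, Set.mem_insert_iff]
        constructor
        · rintro ⟨h1, h2 | h2⟩
          · exact Or.inl h2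
          · exact Or.inr ⟨h1, h2⟩
        · rintro (rfl | ⟨h1, h2⟩)
          · exact ⟨hc, Or.inl rfl⟩
          · exact ⟨h1, Or.inr h2⟩
      rw [this, Set.ncard_insert_of_notMem (fun h => hn.1 h.2) (hfin l), Nat.odd_add_one, ih]
      rw [hcut] at hc
      clear hcut ih this hn hfin hw he
      by_cases h1 : x ∈ Y <;> by_cases h2 : y ∈ Y <;> by_cases h3 : z ∈ Y <;> simp_all
    · have : G.edgeCut Y ∩ {e' | e' ∈ eds ((x, e, y) :: l)} =
          (G.edgeCut Y ∩ {e' | e' ∈ eds l}) := by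
        ext e'
        simp only [eds_cons, List.mem_cons, Set.mem_inter_iff, Set.mem_ofPred_eq]
        constructor
        · rintro ⟨h1, rfl | h2⟩
          · exact absurd h1 hc
          · exact ⟨h1, h2⟩
        · rintro ⟨h1, h2⟩
          exact ⟨h1, Or.inr h2⟩
      rw [this, ih]
      rw [hcut] at hc
      clear hcut ih this hn hfin hw he
      by_cases h1 : x ∈ Y <;> by_cases h2 : y ∈ Y <;> by_cases h3 : z ∈ Y <;> simp_all

theorem Par.diff (h : G.Par S T F) {l : List (V × E × V)} (hl : G.Tr S T F l) :
    G.Par S T (F \ {e | e ∈ eds l}) := by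
  rintro Y hYS hYT ⟨hf, ho⟩
  obtain ⟨p, hp, q, hq, hw⟩ := hl.wk
  have hpY : p ∉ Y := fun h => Set.disjoint_left.1 hYS h hp
  have hqY : q ∉ Y := fun h => Set.disjoint_left.1 hYT h hq
  obtain ⟨h1, h2⟩ := hw.cut_parity Y hl.nodup
  have heven : Even (G.edgeCut Y ∩ {e | e ∈ eds l}).ncard := by
    rw [← Nat.not_odd_iff_even, h2]; simp [hpY, hqY]
  have heq : G.edgeCut Y ∩ F =
      (G.edgeCut Y ∩ (F \ {e | e ∈ eds l})) ∪ (G.edgeCut Y ∩ {e | e ∈ eds l}) := by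
    ext e
    simp only [Set.mem_inter_iff, Set.mem_union, Set.mem_sdiff, Set.mem_ofPred_eq]
    have : e ∈ eds l → e ∈ F := by
      intro he
      obtain ⟨a, ha, rfl⟩ := mem_eds.1 he
      exact hl.sub a ha
    tauto
  refine h Y hYS hYT ?_
  rw [heq]
  refine ⟨hf.union h1, ?_⟩
  rw [Set.ncard_union_eq _ hf h1]
  · exact ho.add_even heven
  · rw [Set.disjoint_left]
    rintro e ⟨-, -, h3⟩ ⟨-, h4⟩
    exact h3 h4

theorem AF.step (h : G.AF S T F) (hST : Disjoint S T) (hpar : G.Par S T F) {e : E}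
    (he : e ∈ G.edgeCut S) (heF : e ∈ F) :
    ∃ l, G.Tr S T F l ∧ e ∈ eds l ∧ G.AF S T (F \ {e | e ∈ eds l}) ∧
      G.Par S T (F \ {e | e ∈ eds l}) := by
  obtain ⟨W, hW, ⟨l, hl, hel⟩, hun⟩ := h.step1 hST hpar he heF
  refine ⟨l, hW.1 l hl, hel, ⟨W \ {l}, ⟨?_, (hW.diff l).2⟩, ?_⟩, hpar.diff (hW.1 l hl)⟩
  · intro l' hl'
    have htr' := hW.1 l' hl'.1
    refine ⟨htr'.wk, htr'.nodup, ?_, htr'.out⟩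
    intro a ha
    exact ⟨htr'.sub a ha, hW.2 hl'.1 hl hl'.2 _ (mem_eds.2 ⟨a, ha, rfl⟩)⟩
  · have : ∀ e, e ∉ eds l → ¬ Cov (W \ {l}) e → ¬ Cov W e := by
      rintro e he hc ⟨l', hl', hel'⟩
      refine hc ⟨l', ⟨hl', ?_⟩, hel'⟩
      rintro rfl
      exact he hel'
    intro e1 h1 e2 h2 h3 h4 h5 h6
    exact hun e1 h1 e2 h2 h3.1 h4.1 (this _ h3.2 h5) (this _ h4.2 h6)

theorem AF.full [Countable E] (h : G.AF S T F) (hST : Disjoint S T) (hpar : G.Par S T F) :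
    ∃ W, G.Full S T F W := by
  classical
  by_cases hE : Nonempty E
  swap
  · refine ⟨∅, ⟨by simp, by simp⟩, fun e => absurd ⟨e⟩ hE⟩
  obtain ⟨en, hen⟩ := exists_surjective_nat E
  let St := {F' : Set E // G.AF S T F' ∧ G.Par S T F'}
  have hstep : ∀ (n : ℕ) (X : St), ∃ p : St × List (V × E × V),
      (en n ∈ G.edgeCut S → en n ∈ X.1 →
        G.Tr S T X.1 p.2 ∧ en n ∈ eds p.2 ∧ p.1.1 = X.1 \ {e | e ∈ eds p.2}) ∧
      (¬ (en n ∈ G.edgeCut S ∧ en n ∈ X.1) → p.1.1 = X.1) := by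
    intro n X
    by_cases hc : en n ∈ G.edgeCut S ∧ en n ∈ X.1
    · obtain ⟨l, h1, h2, h3, h4⟩ := X.2.1.step hST X.2.2 hc.1 hc.2
      exact ⟨(⟨_, h3, h4⟩, l), fun _ _ => ⟨h1, h2, rfl⟩, fun h => absurd hc h⟩
    · exact ⟨(X, []), fun h1 h2 => absurd ⟨h1, h2⟩ hc, fun _ => rfl⟩
  choose nx hnx using hstep
  let X : ℕ → St := fun n => Nat.rec ⟨F, h, hpar⟩ (fun n Y => (nx n Y).1) n
  have hX0 : (X 0).1 = F := rfl
  have hXs : ∀ n, X (n + 1) = (nx n (X n)).1 := fun n => rfl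
  have hmono1 : ∀ n, (X (n + 1)).1 ⊆ (X n).1 := by
    intro n
    rw [hXs]
    by_cases hc : en n ∈ G.edgeCut S ∧ en n ∈ (X n).1
    · rw [((hnx n (X n)).1 hc.1 hc.2).2.2]; exact Set.sdiff_subset
    · rw [(hnx n (X n)).2 hc]
  have hmono : Antitone (fun n => (X n).1) := antitone_nat_of_succ_le hmono1
  let good : ℕ → Prop := fun n => en n ∈ G.edgeCut S ∧ en n ∈ (X n).1
  let L : ℕ → List (V × E × V) := fun n => (nx n (X n)).2
  have hL : ∀ n, good n → G.Tr S T (X n).1 (L n) ∧ en n ∈ eds (L n) ∧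
      (X (n + 1)).1 = (X n).1 \ {e | e ∈ eds (L n)} := fun n hn => (hnx n (X n)).1 hn.1 hn.2
  have hdis : ∀ m n, m < n → good m → good n → ∀ e ∈ eds (L m), e ∉ eds (L n) := by
    intro m n hmn hm hn e he he'
    obtain ⟨a, ha, rfl⟩ := mem_eds.1 he'
    have h1 := (hL n hn).1.sub a ha
    have h2 : a.2.1 ∈ (X (m + 1)).1 := hmono hmn h1
    rw [(hL m hm).2.2] at h2
    exact h2.2 he
  refine ⟨{l | ∃ n, good n ∧ l = L n}, ⟨?_, ?_⟩, ?_⟩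
  · rintro l ⟨n, hn, rfl⟩
    have htr := (hL n hn).1
    exact ⟨htr.wk, htr.nodup, fun a ha => hmono (Nat.zero_le n) (htr.sub a ha), htr.out⟩
  · rintro l ⟨n, hn, rfl⟩ l' ⟨m, hm, rfl⟩ hne e he he'
    rcases lt_trichotomy n m with h | h | h
    · exact hdis n m h hn hm e he he'
    · exact hne (by rw [h])
    · exact hdis m n h hm hn e he' he
  · intro e he heF
    have key : ∀ n, e ∈ (X n).1 ∨ Cov {l | ∃ n, good n ∧ l = L n} e := by
      intro n
      induction n with
      | zero => exact Or.inl heF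
      | succ n ih =>
        rcases ih with ih | ih
        · by_cases hn : good n
          · by_cases hel : e ∈ eds (L n)
            · exact Or.inr ⟨L n, ⟨n, hn, rfl⟩, hel⟩
            · left
              rw [(hL n hn).2.2]
              exact ⟨ih, hel⟩
          · left
            rw [hXs, (hnx n (X n)).2 hn]
            exact ih
        · exact Or.inr ih
    obtain ⟨n, rfl⟩ := hen e
    rcases key n with h | h
    · exact ⟨L n, ⟨n, ⟨he, h⟩, rfl⟩, (hL n ⟨he, h⟩).2.1⟩
    · exact h


theorem Full.first {l : List (V × E × V)} (hST : Disjoint S T) (hl : G.Tr S T F l) {e : E}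
    (he : e ∈ G.edgeCut S) (hel : e ∈ eds l) :
    ∃ a y R, l = (a, e, y) :: R ∧ G.I e = s(a, y) ∧ a ∈ S ∧ y ∉ S ∧ (∃ b ∈ T, G.Wk y b R) ∧
      ∀ b ∈ R, b.1 ∉ S ∧ b.2.2 ∉ S := by
  obtain ⟨a, e', y, R, rfl, hI, ha, hy, -, hw⟩ := hl.eq_cons hST
  have : e = e' := hl.cut_edge hel he
  subst this
  exact ⟨a, y, R, rfl, hI, ha, hy, hw, hl.tail_out⟩

theorem edgeCut_compl (X : Set V) : G.edgeCut Xᶜ = G.edgeCut X := by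
  ext e
  induction h : G.I e using Sym2.ind with
  | _ a b =>
    rw [mem_edgeCut_iff h, mem_edgeCut_iff h]
    simp only [Set.mem_compl_iff, not_not]
    tauto

theorem combine {s t : V} {X : Set V} {Wa Wb : Set (List (V × E × V))} (hs : s ∈ X) (ht : t ∉ X)
    (ha : G.Full Xᶜ {s} Set.univ Wa) (hb : G.Full X {t} Set.univ Wb) :
    G.IsEMABCut {s} {t} (G.edgeCut X) := by
  have hSa : Disjoint Xᶜ {s} := by simpa using hs
  have hSb : Disjoint X {t} := by simpa using ht
  have key : ∀ e : G.edgeCut X, ∃ q : V × V × List (V × E × V) × List (V × E × V),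
      G.I e.1 = s(q.1, q.2.1) ∧ q.1 ∈ X ∧ q.2.1 ∉ X ∧ (q.2.1, e.1, q.1) :: q.2.2.1 ∈ Wa ∧
      (q.1, e.1, q.2.1) :: q.2.2.2 ∈ Wb ∧ G.Wk q.1 s q.2.2.1 ∧ G.Wk q.2.1 t q.2.2.2 ∧
      (∀ b ∈ q.2.2.1, b.1 ∈ X ∧ b.2.2 ∈ X) ∧ (∀ b ∈ q.2.2.2, b.1 ∉ X ∧ b.2.2 ∉ X) := by
    rintro ⟨e, he⟩
    obtain ⟨lb, hlb, helb⟩ := hb.2 e he (Set.mem_univ _)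
    have he' : e ∈ G.edgeCut Xᶜ := by rw [edgeCut_compl]; exact he
    obtain ⟨la, hla, hela⟩ := ha.2 e he' (Set.mem_univ _)
    obtain ⟨u, w, Rb, rfl, hI, hu, hw, ⟨t', ht', hwk⟩, hR⟩ := Full.first hSb (hb.1.1 lb hlb) he helb
    obtain ⟨w', u', Ra, rfl, hI', hw', hu', ⟨s', hs', hwk'⟩, hR'⟩ :=
      Full.first hSa (ha.1.1 la hla) he' hela
    have ht' : t' = t := ht'
    have hs' : s' = s := hs'
    subst ht'; subst hs'
    have hu' : u' ∈ X := not_not.1 hu'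
    rw [hI] at hI'
    rcases Sym2.eq_iff.1 hI' with ⟨h1, h2⟩ | ⟨h1, h2⟩
    · exact absurd hu (h1 ▸ hw')
    · subst h1; subst h2
      exact ⟨(u, w, Ra, Rb), hI, hu, hw, hla, hlb, hwk', hwk,
        fun b hb => ⟨not_not.1 (hR' b hb).1, not_not.1 (hR' b hb).2⟩, hR⟩
  choose q hI hu hw hla hlb hwa hwb hRa hRb using key
  let k : G.edgeCut X → List (V × E × V) := fun e =>
    rev (q e).2.2.1 ++ ((q e).1, e.1, (q e).2.1) :: (q e).2.2.2
  have hk : ∀ e, G.Wk s t (k e) := fun e => (hwa e).rev.append (Wk.cons (hI e) (hwb e))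
  have hty : ∀ e x, x ∈ eds (k e) →
      (x ∈ eds (q e).2.2.1 ∧ ∀ v ∈ G.I x, v ∈ X) ∨ x = e.1 ∨
      (x ∈ eds (q e).2.2.2 ∧ ∀ v ∈ G.I x, v ∉ X) := by
    intro e x hx
    simp only [k, eds_append, eds_cons, eds_rev, List.mem_append, List.mem_reverse,
      List.mem_cons] at hx
    rcases hx with hx | hx | hx
    · left
      refine ⟨hx, ?_⟩
      obtain ⟨b, hb, rfl⟩ := mem_eds.1 hx
      rw [(hwa e).arc hb]
      intro v hv
      rcases Sym2.mem_iff.1 hv with rfl | rfl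
      · exact (hRa e b hb).1
      · exact (hRa e b hb).2
    · exact Or.inr (Or.inl hx)
    · right; right
      refine ⟨hx, ?_⟩
      obtain ⟨b, hb, rfl⟩ := mem_eds.1 hx
      rw [(hwb e).arc hb]
      intro v hv
      rcases Sym2.mem_iff.1 hv with rfl | rfl
      · exact (hRb e b hb).1
      · exact (hRb e b hb).2
  have h1 : ∀ e : G.edgeCut X, (q e).1 ∈ G.I e.1 := fun e => by rw [hI e]; simp
  have h2 : ∀ e : G.edgeCut X, (q e).2.1 ∈ G.I e.1 := fun e => by rw [hI e]; simp
  have hv : ∀ x, ∃ v, v ∈ G.I x := fun x => by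
    induction h : G.I x using Sym2.ind with
    | _ a b => exact ⟨a, by simp⟩
  refine em_of_walks hs ht (Set.range k) ?_ ?_ ?_ ?_
  · rintro _ ⟨e, rfl⟩; exact hk e
  · rintro _ ⟨e, rfl⟩ _ ⟨e', rfl⟩ hne x hx hx'
    have hee : e.1 ≠ e'.1 := fun h => hne (by rw [Subtype.ext h])
    rcases hty e x hx with ⟨hx1, hX1⟩ | rfl | ⟨hx1, hX1⟩ <;>
    rcases hty e' _ hx' with ⟨hx2, hX2⟩ | hx2 | ⟨hx2, hX2⟩
    · refine ha.1.2 (hla e) (hla e') ?_ x (by rw [eds_cons]; exact List.mem_cons_of_mem _ hx1)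
        (by rw [eds_cons]; exact List.mem_cons_of_mem _ hx2)
      intro h
      simp only [List.cons.injEq, Prod.mk.injEq] at h
      exact hee h.1.2.1
    · subst hx2; exact hw e' (hX1 _ (h2 e'))
    · obtain ⟨v, hv⟩ := hv _
      exact hX2 v hv (hX1 v hv)
    · exact hw e (hX2 _ (h2 e))
    · exact hee hx2
    · exact hX2 _ (h1 e) (hu e)
    · obtain ⟨v, hv⟩ := hv _
      exact hX1 v hv (hX2 v hv)
    · subst hx2; exact hX1 _ (h1 e') (hu e')
    · refine hb.1.2 (hlb e) (hlb e') ?_ x (by rw [eds_cons]; exact List.mem_cons_of_mem _ hx1)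
        (by rw [eds_cons]; exact List.mem_cons_of_mem _ hx2)
      intro h
      simp only [List.cons.injEq, Prod.mk.injEq] at h
      exact hee h.1.2.1
  · rintro _ ⟨e, rfl⟩ a hm ⟨ha1, ha2⟩
    simp only [k, List.mem_append, List.mem_cons, mem_rev] at hm
    rcases hm with hm | rfl | hm
    · exact ha1 (hRa e _ hm).2
    · exact hw e ha2
    · exact (hRb e _ hm).2 ha2
  · intro e he
    refine ⟨_, ⟨⟨e, he⟩, rfl⟩, ?_⟩
    simp [k, eds_append, eds_cons]

/-- Lifting walks to a restricted grapht. -/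
theorem Wk.lift {l : List (V × E × V)} {x z : V} (h : G.Wk x z l) (hF : ∀ a ∈ l, a.2.1 ∈ F) :
    ∃ l' : List (V × F × V), (G.restrict F).Wk x z l' ∧
      l'.map (fun a => (a.1, a.2.1.1, a.2.2)) = l := by
  induction h with
  | nil x => exact ⟨[], Wk.nil x, rfl⟩
  | @cons x y z e l he hw ih =>
    obtain ⟨l', h1, h2⟩ := ih (fun a ha => hF a (List.mem_cons_of_mem _ ha))
    refine ⟨(x, ⟨e, hF (x, e, y) (by simp)⟩, y) :: l', Wk.cons he h1, by simp [h2]⟩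

theorem Full.linked {s t : V} (hst : s ≠ t) (h : G.Full {s} {t} F W) :
    (G.restrict F).StLinked s t := by
  have hST : Disjoint ({s} : Set V) {t} := by simpa using hst
  have key : ∀ l : W, ∃ P : (G.restrict F).Path, (G.restrict F).IsABPath {s} {t} P ∧
      (∃ l', (G.restrict F).Wk s t l' ∧ P.edges = eds l') ∧
      ∀ e ∈ P.edges, e.1 ∈ eds l.1 := by
    rintro ⟨l, hl⟩
    have htr := h.1.1 l hl
    obtain ⟨s', hs', t', ht', hw⟩ := htr.wk
    have ht' : t' = t := ht'
    have hs' : s' = s := hs'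
    subst ht'; subst hs'
    obtain ⟨l', h1, h2⟩ := hw.lift htr.sub
    obtain ⟨P, hP, l2, h3, h4, h5⟩ := h1.toPath
    refine ⟨P, hP, ⟨l2, h3, h4⟩, ?_⟩
    intro e he
    rw [h4, mem_eds] at he
    obtain ⟨a, ha, rfl⟩ := he
    change a.2.1.1 ∈ eds l
    rw [← h2]
    exact mem_eds.2 ⟨_, List.mem_map.2 ⟨a, h5 a ha, rfl⟩, rfl⟩
  choose p hp hw hsub using key
  refine ⟨Set.range p, ?_, ?_, ?_⟩
  · rintro _ ⟨l, rfl⟩ _ ⟨l', rfl⟩ hne e he he'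
    have hll : l.1 ≠ l'.1 := fun h => hne (by rw [Subtype.ext h])
    exact h.1.2 l.2 l'.2 hll e.1 (hsub l e he) (hsub l' e he')
  · rintro _ ⟨l, rfl⟩; exact hp l
  · intro e he
    have he1 : e.1 ∈ G.edgeCut {s} := he
    obtain ⟨l, hl, hel⟩ := h.2 e.1 he1 e.2
    refine ⟨_, ⟨⟨l, hl⟩, rfl⟩, ?_⟩
    obtain ⟨l', h1, h2⟩ := hw ⟨l, hl⟩
    obtain ⟨a, ha, h3, h4⟩ := h1.exists_cross (Y := ({s} : Set V)ᶜ) (by simp) (fun h => hst h.symm)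
    have h5 : a.2.1 ∈ (G.restrict F).edgeCut {s} := by
      rw [mem_edgeCut_iff (h1.arc ha)]; exact Or.inl ⟨not_not.1 h3, h4⟩
    have h6 : a.2.1 ∈ (p ⟨l, hl⟩).edges := by rw [h2]; exact mem_eds.2 ⟨a, ha, rfl⟩
    have h7 := hsub _ _ h6
    have htr := h.1.1 l hl
    obtain ⟨a', e', y, R, rfl, -⟩ := htr.eq_cons hST
    have h8 : e.1 = a.2.1.1 := (htr.cut_edge hel he1).trans (htr.cut_edge h7 h5).symm
    rw [Subtype.ext h8]; exact h6

theorem full_of_em {s t : V} (hEM : G.IsEMABCut {s} {t} (G.edgeCut {s})) :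
    ∃ W, G.Full {s} {t} Set.univ W := by
  obtain ⟨-, Ps, hd, hAB, -, hcov⟩ := hEM
  have : ∀ P : Ps, ∃ l, G.Wk s t l ∧ (vts l t).Nodup ∧ eds l = P.1.edges :=
    fun P => P.1.toWk (hAB P.1 P.2)
  choose k h1 h2 h3 using this
  refine ⟨Set.range k, ⟨?_, ?_⟩, ?_⟩
  · rintro _ ⟨P, rfl⟩
    exact ⟨⟨s, rfl, t, rfl, h1 P⟩, (h1 P).eds_nodup (h2 P), fun _ _ => Set.mem_univ _,
      (h1 P).target_ne (h2 P)⟩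
  · rintro _ ⟨P, rfl⟩ _ ⟨P', rfl⟩ hne e he he'
    rw [h3] at he he'
    exact hd P.2 P'.2 (fun h => hne (by rw [Subtype.ext h])) e he he'
  · intro e he _
    obtain ⟨P, hP, heP⟩ := hcov e he
    exact ⟨_, ⟨⟨P, hP⟩, rfl⟩, by rw [h3]; exact heP⟩

theorem em_of_almost [Countable E] {s t : V} {X : Set V} {f : E} (hT : G.T = {s, t})
    (hG : G.InnerEulerian) (hs : s ∈ X) (ht : t ∉ X)
    (hsys : G.Sys {s} {t} F W)
    (hcov : ∀ e ∈ G.edgeCut X, e ≠ f → Cov W e)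
    (hc : ∀ l ∈ W, ∀ a ∈ l, ¬ (a.1 ∉ X ∧ a.2.2 ∈ X)) :
    G.IsEMABCut {s} {t} (G.edgeCut X) := by
  have hsp : ∀ l : W, ∃ q : List (V × E × V) × (V × E × V) × List (V × E × V),
      l.1 = q.1 ++ q.2.1 :: q.2.2 ∧ q.2.1.1 ∈ X ∧ q.2.1.2.2 ∉ X ∧
      (∀ b ∈ q.1, b.1 ∈ X ∧ b.2.2 ∈ X) ∧ (∀ b ∈ q.2.2, b.1 ∉ X ∧ b.2.2 ∉ X) ∧
      G.Wk s t (q.1 ++ q.2.1 :: q.2.2) ∧ (eds (q.1 ++ q.2.1 :: q.2.2)).Nodup := by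
    rintro ⟨l, hl⟩
    have htr := hsys.1 l hl
    obtain ⟨s', hs', t', ht', hw⟩ := htr.wk
    have ht' : t' = t := ht'
    have hs' : s' = s := hs'
    subst ht'; subst hs'
    obtain ⟨A, a, B, h1, h2, h3, h4, h5⟩ := hw.out_split (hc l hl) hs ht
    exact ⟨(A, a, B), h1, h2, h3, h4, h5, h1 ▸ hw, h1 ▸ htr.nodup⟩
  choose q hq ha1 ha2 hA hB hw hn using hsp
  have hcutmem : ∀ l : W, ∀ e ∈ eds l.1, e ∈ G.edgeCut X → e = (q l).2.1.2.1 := by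
    intro l e he heX
    rw [hq l] at he
    obtain ⟨b, hb, rfl⟩ := mem_eds.1 he
    rw [mem_edgeCut_iff ((hw l).arc hb)] at heX
    rcases List.mem_append.1 hb with hb | hb
    · have := hA l b hb; tauto
    · rcases List.mem_cons.1 hb with rfl | hb
      · rfl
      · have := hB l b hb; tauto
  have hdis : ∀ l l' : W, l ≠ l' → ∀ e ∈ eds ((q l).1 ++ (q l).2.1 :: (q l).2.2),
      e ∉ eds ((q l').1 ++ (q l').2.1 :: (q l').2.2) := by
    intro l l' hne
    rw [← hq, ← hq]
    exact hsys.2 l.2 l'.2 (fun h => hne (Subtype.ext h))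
  have hb : ∃ Wb, G.Full X {t} Set.univ Wb := by
    refine AF.full ⟨Set.range (fun l : W => (q l).2.1 :: (q l).2.2), ⟨?_, ?_⟩, ?_⟩ ?_ ?_
    · rintro _ ⟨l, rfl⟩
      obtain ⟨-, h2, h3⟩ := (hw l).split
      have := hn l
      rw [eds_append] at this
      refine ⟨⟨_, ha1 l, t, rfl, Wk.cons h2 h3⟩, (List.nodup_append.1 this).2.1,
        fun _ _ => Set.mem_univ _, ?_⟩
      intro b hb
      rcases List.mem_cons.1 hb with rfl | hb
      · exact ha2 l
      · exact (hB l b hb).2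
    · rintro _ ⟨l, rfl⟩ _ ⟨l', rfl⟩ hne e he he'
      refine hdis l l' (fun h => hne (by rw [h])) e ?_ ?_
      · rw [eds_append]; exact List.mem_append_right _ he
      · rw [eds_append]; exact List.mem_append_right _ he'
    · have : ∀ e ∈ G.edgeCut X, ¬ Cov (Set.range (fun l : W => (q l).2.1 :: (q l).2.2)) e →
          e = f := by
        intro e he hnc
        by_contra hne
        obtain ⟨l, hl, hel⟩ := hcov e he hne
        refine hnc ⟨_, ⟨⟨l, hl⟩, rfl⟩, ?_⟩
        rw [hcutmem ⟨l, hl⟩ e hel he, eds_cons]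
        simp
      intro e he e' he' _ _ h1 h2
      rw [this e he h1, this e' he' h2]
    · simpa using ht
    · intro Y hYS hYT
      rw [Set.inter_univ]
      refine hG Y ?_
      rw [hT, Set.disjoint_left]
      rintro y hy (rfl | hy')
      · exact Set.disjoint_left.1 hYS hy hs
      · exact Set.disjoint_left.1 hYT hy hy'
  have ha : ∃ Wa, G.Full Xᶜ {s} Set.univ Wa := by
    refine AF.full ⟨Set.range (fun l : W => rev ((q l).1 ++ [(q l).2.1])), ⟨?_, ?_⟩, ?_⟩ ?_ ?_
    · rintro _ ⟨l, rfl⟩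
      obtain ⟨h1, h2, h3⟩ := (hw l).split
      have := hn l
      rw [eds_append, eds_cons, ← List.singleton_append, ← List.append_assoc] at this
      refine ⟨⟨_, ha2 l, s, rfl, (h1.append (Wk.cons h2 (Wk.nil _))).rev⟩, ?_,
        fun _ _ => Set.mem_univ _, ?_⟩
      · rw [eds_rev, List.nodup_reverse, eds_append]
        exact (List.nodup_append.1 this).1
      intro b hb
      rw [mem_rev, List.mem_append, List.mem_singleton] at hb
      refine not_not.2 ?_
      rcases hb with hb | hb
      · exact (hA l _ hb).1
      · have := ha1 l
        rw [← hb] at this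
        exact this
    · rintro _ ⟨l, rfl⟩ _ ⟨l', rfl⟩ hne e he he'
      refine hdis l l' (fun h => hne (by rw [h])) e ?_ ?_
      · simp only [eds_append, eds_cons, eds_rev, List.mem_append, List.mem_reverse,
          List.mem_cons] at he ⊢
        rcases he with he | he | he
        · exact Or.inl he
        · exact Or.inr (Or.inl he)
        · simp [eds] at he
      · simp only [eds_append, eds_cons, eds_rev, List.mem_append, List.mem_reverse,
          List.mem_cons] at he' ⊢
        rcases he' with he | he | he
        · exact Or.inl he
        · exact Or.inr (Or.inl he)
        · simp [eds] at he
    · rw [edgeCut_compl]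
      have : ∀ e ∈ G.edgeCut X, ¬ Cov (Set.range (fun l : W => rev ((q l).1 ++ [(q l).2.1]))) e →
          e = f := by
        intro e he hnc
        by_contra hne
        obtain ⟨l, hl, hel⟩ := hcov e he hne
        refine hnc ⟨_, ⟨⟨l, hl⟩, rfl⟩, ?_⟩
        rw [hcutmem ⟨l, hl⟩ e hel he, eds_rev, eds_append, eds_cons]
        simp
      intro e he e' he' _ _ h1 h2
      rw [this e he h1, this e' he' h2]
    · simpa using hs
    · intro Y hYS hYT
      rw [Set.inter_univ]
      refine hG Y ?_
      rw [hT, Set.disjoint_left]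
      rintro y hy (rfl | hy')
      · exact Set.disjoint_left.1 hYT hy rfl
      · have hy' : y = t := hy'
        exact Set.disjoint_left.1 hYS hy (hy' ▸ ht)
  obtain ⟨Wa, ha⟩ := ha
  obtain ⟨Wb, hb⟩ := hb
  exact combine hs ht ha hb

end Grapht

/-- **Safe deletion of two edges.** In a countable inner Eulerian two-terminal grapht
in which `δ(s)` is the unique Erdős–Menger `st`-cut, `s` remains linked after deleting
any (at most) two edges. -/
theorem safe_deletion_of_two_edges {V : Type u} {E : Type v} [Countable E]
    (G : Grapht V E) (s t : V) (hst : s ≠ t) (hT : G.T = {s, t})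
    (hG : G.InnerEulerian)
    (hEM : G.IsEMABCut {s} {t} (G.edgeCut {s}))
    (huniq : ∀ C : Set E, G.IsEMABCut {s} {t} C → C = G.edgeCut {s}) :
    ∀ f g : E, (G.restrict {f, g}ᶜ).StLinked s t := by
  intro f g
  have hST : Disjoint ({s} : Set V) {t} := by simpa using hst
  have main : ∀ (F : Set E) (W : Set (List (V × E × V))) (g : E), G.Full {s} {t} F W →
      (∀ e, e ∉ F → e = f) → ∃ W', G.Full {s} {t} (F \ {g}) W' := by
    intro F W g hW hF
    rcases Grapht.delete_one (g := g) hST hW with h | ⟨X, hsX, hXt, hgX, hgS, hcov, hc⟩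
    · exact h
    · exfalso
      have hs : s ∈ X := hsX rfl
      have ht : t ∉ X := fun h => Set.disjoint_left.1 hXt h rfl
      have hem := Grapht.em_of_almost (f := f) hT hG hs ht hW.1
        (fun e he hne => hcov e he (by by_contra h; exact hne (hF e h))) hc
      rw [huniq _ hem] at hgX
      exact hgS hgX
  obtain ⟨W0, h0⟩ := Grapht.full_of_em hEM
  obtain ⟨W1, h1⟩ := main _ _ f h0 (fun e he => absurd (Set.mem_univ e) he)
  obtain ⟨W2, h2⟩ := main _ _ g h1 (fun e he => by
    by_contra h
    exact he ⟨Set.mem_univ e, h⟩)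
  have heq : ((Set.univ \ {f}) \ {g} : Set E) = {f, g}ᶜ := by
    ext e
    simp
  rw [heq] at h2
  exact h2.linked hst
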